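/- Let K be a field, α, β, γ ∈ K with β ≠ 0, and let A = A(α,β,γ) be the corresponding down-up algebra. Then A is a PSF ring: every finitely generated projective right A-module P is stably free, i.e. there exist natural numbers n, m with P ⊕ Aⁿ ≅ Aᵐ as right A-modules. -/

import Mathlib

noncomputable section

/-- Defining relations of the down-up algebra `A(α,β,γ)`:
`D = ι 0`, `U = ι 1`, relations `DU² = αUDU + βU²D + γU` and `D²U = αDUD + βUD² + γD`. -/
inductive DownUpRel (K : Type) [Field K] (a b g : K) :
    FreeAlgebra K (Fin 2) → FreeAlgebra K (Fin 2) → Prop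
  | rel1 : DownUpRel K a b g
      (FreeAlgebra.ι K (0 : Fin 2) * FreeAlgebra.ι K (1 : Fin 2) * FreeAlgebra.ι K (1 : Fin 2))
      (a • (FreeAlgebra.ι K (1 : Fin 2) * FreeAlgebra.ι K (0 : Fin 2) * FreeAlgebra.ι K (1 : Fin 2)) +
       b • (FreeAlgebra.ι K (1 : Fin 2) * FreeAlgebra.ι K (1 : Fin 2) * FreeAlgebra.ι K (0 : Fin 2)) +
       g • FreeAlgebra.ι K (1 : Fin 2))
  | rel2 : DownUpRel K a b g
      (FreeAlgebra.ι K (0 : Fin 2) * FreeAlgebra.ι K (0 : Fin 2) * FreeAlgebra.ι K (1 : Fin 2))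
      (a • (FreeAlgebra.ι K (0 : Fin 2) * FreeAlgebra.ι K (1 : Fin 2) * FreeAlgebra.ι K (0 : Fin 2)) +
       b • (FreeAlgebra.ι K (1 : Fin 2) * FreeAlgebra.ι K (0 : Fin 2) * FreeAlgebra.ι K (0 : Fin 2)) +
       g • FreeAlgebra.ι K (0 : Fin 2))

/-- The down-up algebra `A(α,β,γ)`. -/
abbrev DownUp (K : Type) [Field K] (a b g : K) := RingQuot (DownUpRel K a b g)

/-- A right `A`-module `P` (realized as a left `Aᵐᵒᵖ`-module) is stably free if
`P ⊕ Aⁿ ≅ Aᵐ` as right `A`-modules for some naturals `n m`. -/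
def IsStablyFreeRight (A : Type) [Ring A] (P : Type) [AddCommGroup P] [Module Aᵐᵒᵖ P] : Prop :=
  ∃ n m : ℕ, Nonempty ((P × (Fin n → A)) ≃ₗ[Aᵐᵒᵖ] (Fin m → A))

/-!
Let `u` and `d` have degree one, so that `x = u d` and `y = d u` have degree two. By the PBW theorem
the down-up algebra is, at each weight `n`, a free module of rank one over `K[x, y]`, generated by
`u ^ n` or `d ^ (-n)`. In these coordinates one checks weight by weight that the Koszul complex
`0 → A → A² → A² → A` of the two cubic relations is exact on associated graded rings. The Rees ring
of the filtration is again generated by a down-up pair, over `K[t]`; a double application of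
Hilbert's basis theorem makes it noetherian, and hence every filtered submodule of a finite free
module has finitely many strict generators. Given a finitely generated projective module `P`, choose
strict presentations three times in a row. Dimension shifting along the Koszul complex shows that
the third syzygy is free, by the graded Nakayama lemma over the field `gr(A)₀ = K`. The syzygies of
the projective module `P` split off, and therefore `P` is stably free.
-/

section StablyFree

open Module

variable {A M P : Type*} [Ring A] [AddCommGroup M] [Module A M] [AddCommGroup P] [Module A P]

lemma exists_linearEquiv_prod_ker [Projective A P] (f : M →ₗ[A] P)
    (hf : Function.Surjective f) : Nonempty (M ≃ₗ[A] P × LinearMap.ker f) := by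
  obtain ⟨s, hs⟩ := projective_lifting_property f LinearMap.id hf
  exact ⟨((LinearMap.exact_subtype_ker_map f).splitSurjectiveEquiv
    (Submodule.injective_subtype _) ⟨s, hs⟩).1 ≪≫ₗ .prodComm A _ P⟩

lemma projective_ker [Projective A M] [Projective A P] (f : M →ₗ[A] P)
    (hf : Function.Surjective f) : Projective A (LinearMap.ker f) := by
  obtain ⟨e⟩ := exists_linearEquiv_prod_ker f hf
  have : Projective A (P × LinearMap.ker f) := .of_equiv e
  exact .of_split (LinearMap.inr A P _) (LinearMap.snd A P _) (LinearMap.snd_comp_inr A _ _)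

lemma isStablyFree_of_ker [Module.Finite A M] [Free A M] [Projective A P] (f : M →ₗ[A] P)
    (hf : Function.Surjective f) [IsStablyFree A (LinearMap.ker f)] : IsStablyFree A P := by
  obtain ⟨e⟩ := exists_linearEquiv_prod_ker f hf
  obtain ⟨N, _, _, _, _, _⟩ := IsStablyFree.exist_free_prod A (LinearMap.ker f)
  have : Module.Finite A (P × LinearMap.ker f) := .equiv e
  have : Module.Finite A (LinearMap.ker f) := .of_surjective (LinearMap.snd A P _)
    Prod.snd_surjective
  have : Free A (P × LinearMap.ker f × N) :=
    .of_equiv (e.prodCongr (.refl A N) ≪≫ₗ .prodAssoc A P _ N)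
  exact .of_free_prod A P (LinearMap.ker f × N)

lemma exists_linearEquiv_fin_fun (A M : Type*) [Ring A] [AddCommGroup M] [Module A M]
    [Module.Finite A M] [Free A M] : ∃ n : ℕ, Nonempty (M ≃ₗ[A] (Fin n → A)) :=
  ⟨_, ⟨((Free.chooseBasis A M).reindex (Fintype.equivFin _)).equivFun⟩⟩

lemma exists_prod_fin_fun_linearEquiv (A P : Type*) [Ring A] [AddCommGroup P] [Module A P]
    [Module.Finite A P] [IsStablyFree A P] :
    ∃ n m : ℕ, Nonempty ((P × (Fin n → A)) ≃ₗ[A] (Fin m → A)) := by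
  obtain ⟨N, _, _, _, _, _⟩ := IsStablyFree.exist_free_prod A P
  obtain ⟨n, ⟨e⟩⟩ := exists_linearEquiv_fin_fun A N
  obtain ⟨m, ⟨e'⟩⟩ := exists_linearEquiv_fin_fun A (P × N)
  exact ⟨n, m, ⟨(LinearEquiv.refl A P).prodCongr e.symm ≪≫ₗ e'⟩⟩

end StablyFree

section HilbertBasis

instance wellFoundedGT_natOrderHom (α : Type*) [PartialOrder α] [WellFoundedGT α] :
    WellFoundedGT (ℕ →o α) := by
  rw [wellFoundedGT_iff_monotone_chain_condition]
  intro c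
  obtain ⟨N, hN⟩ := wellFoundedGT_iff_monotone_chain_condition.mp ‹WellFoundedGT α›
    ⟨fun n ↦ c n n, fun m n h ↦ (c.monotone h m).trans ((c n).monotone h)⟩
  choose s hs using fun k ↦ wellFoundedGT_iff_monotone_chain_condition.mp ‹WellFoundedGT α›
    ⟨fun n ↦ c n k, fun m n h ↦ c.monotone h k⟩
  refine ⟨N ⊔ (Finset.range N).sup s, fun m hm ↦ OrderHom.ext _ _ (funext fun k ↦ ?_)⟩
  obtain ⟨hNm, hsm⟩ := sup_le_iff.mp hm
  rcases lt_or_ge k N with hk | hk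
  · have hsk : s k ≤ (Finset.range N).sup s := Finset.le_sup (Finset.mem_range.mpr hk)
    exact (hs k _ (hsk.trans le_sup_right)).symm.trans (hs k m (hsk.trans hsm))
  · have diag (n : ℕ) (hn : N ≤ n) : c n k = c N N := by
      refine le_antisymm ?_ ((c.monotone hn N).trans ((c n).monotone hk))
      calc c n k ≤ c (n ⊔ k) (n ⊔ k) :=
            (c.monotone le_sup_left k).trans ((c _).monotone le_sup_right)
        _ = c N N := (hN _ (hn.trans le_sup_left)).symm
    rw [diag _ le_sup_left, diag m hNm]

/-- The condition `f(T) x + f(T) = x f(T) + f(T)`, under which the subring generated by `f(T)` and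
`x` is an almost normalizing extension of `f(T)` in the sense of McConnell and Robson. -/
structure IsAlmostNormalizing {T S : Type*} [Ring T] [Ring S] (f : T →+* S) (x : S) : Prop where
  map_mul_gen (t : T) : ∃ p q, f t * x = x * f p + f q
  gen_mul_map (t : T) : ∃ p q, x * f t = f p * x + f q

namespace IsAlmostNormalizing

variable {T S : Type*} [Ring T] [Ring S] (f : T →+* S) (x : S)

/-- The elements `∑_{j < k} x ^ j * f t_j`, that is, those of degree less than `k` in `x`. -/
def degreeLT : ℕ → AddSubgroup S
  | 0 => ⊥
  | k + 1 => ((AddMonoidHom.mulLeft (x ^ k)).comp f.toAddMonoidHom).range ⊔ degreeLT k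

variable {f x}

lemma mem_degreeLT_succ {k : ℕ} {s : S} :
    s ∈ degreeLT f x (k + 1) ↔ ∃ t, ∃ r ∈ degreeLT f x k, x ^ k * f t + r = s := by
  simp [degreeLT, AddSubgroup.mem_sup]

lemma pow_mul_map_mem_degreeLT (k : ℕ) (t : T) : x ^ k * f t ∈ degreeLT f x (k + 1) :=
  mem_degreeLT_succ.mpr ⟨t, 0, zero_mem _, add_zero _⟩

lemma degreeLT_mono : Monotone (degreeLT f x) :=
  monotone_nat_of_le_succ fun _ ↦ le_sup_right

lemma gen_mul_mem_degreeLT {k : ℕ} {s : S} (hs : s ∈ degreeLT f x k) :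
    x * s ∈ degreeLT f x (k + 1) := by
  induction k generalizing s with
  | zero => simp [show s = 0 from hs, zero_mem]
  | succ k ih =>
    obtain ⟨t, r, hr, rfl⟩ := mem_degreeLT_succ.mp hs
    exact mem_degreeLT_succ.mpr ⟨t, x * r, ih hr, by rw [mul_add, pow_succ', mul_assoc]⟩

lemma mul_map_mem_degreeLT {k : ℕ} {s : S} (hs : s ∈ degreeLT f x k) (t : T) :
    s * f t ∈ degreeLT f x k := by
  induction k generalizing s with
  | zero => simp [show s = 0 from hs, zero_mem]
  | succ k ih =>
    obtain ⟨t', r, hr, rfl⟩ := mem_degreeLT_succ.mp hs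
    exact mem_degreeLT_succ.mpr ⟨t' * t, r * f t, ih hr, by rw [add_mul, map_mul, mul_assoc]⟩

variable (h : IsAlmostNormalizing f x)

include h

lemma exists_map_mul_pow_sub_mem (k : ℕ) (t : T) :
    ∃ t', f t * x ^ k - x ^ k * f t' ∈ degreeLT f x k := by
  induction k generalizing t with
  | zero => exact ⟨t, by simp [zero_mem]⟩
  | succ k ih =>
    obtain ⟨p, q, hpq⟩ := h.map_mul_gen t
    obtain ⟨p', hp'⟩ := ih p
    obtain ⟨q', hq'⟩ := ih q
    refine ⟨p', ?_⟩
    have expand : f t * x ^ (k + 1) - x ^ (k + 1) * f p' =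
        x * (f p * x ^ k - x ^ k * f p') + (x ^ k * f q' + (f q * x ^ k - x ^ k * f q')) := by
      rw [pow_succ', ← mul_assoc, hpq]; noncomm_ring
    rw [expand]
    exact add_mem (gen_mul_mem_degreeLT hp') (mem_degreeLT_succ.mpr ⟨q', _, hq', rfl⟩)

lemma map_mul_mem_degreeLT {k : ℕ} {s : S} (hs : s ∈ degreeLT f x k) (t : T) :
    f t * s ∈ degreeLT f x k := by
  induction k generalizing s with
  | zero => simp [show s = 0 from hs, zero_mem]
  | succ k ih =>
    obtain ⟨t', r, hr, rfl⟩ := mem_degreeLT_succ.mp hs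
    obtain ⟨p, hp⟩ := h.exists_map_mul_pow_sub_mem k t
    refine mem_degreeLT_succ.mpr ⟨p * t', (f t * x ^ k - x ^ k * f p) * f t' + f t * r,
      add_mem (mul_map_mem_degreeLT hp t') (ih hr), ?_⟩
    rw [map_mul]; noncomm_ring

lemma exists_map_mul_pow_sub_pow_mul_map_mem (k : ℕ) (t : T) :
    ∃ t', f t' * x ^ k - x ^ k * f t ∈ degreeLT f x k := by
  induction k with
  | zero => exact ⟨t, by simp [zero_mem]⟩
  | succ k ih =>
    obtain ⟨t', ht'⟩ := ih
    obtain ⟨p, q, hpq⟩ := h.gen_mul_map t'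
    refine ⟨p, ?_⟩
    have expand : f p * x ^ (k + 1) - x ^ (k + 1) * f t =
        x * (f t' * x ^ k - x ^ k * f t) - f q * (x ^ k * f 1) := by
      rw [mul_sub, ← mul_assoc x (f t'), hpq, pow_succ', map_one]; noncomm_ring
    rw [expand]
    exact sub_mem (gen_mul_mem_degreeLT ht')
      (h.map_mul_mem_degreeLT (pow_mul_map_mem_degreeLT k 1) q)

lemma exists_mem_degreeLT (hgen : Subring.closure (Set.range f ∪ {x}) = ⊤) (s : S) :
    ∃ k, s ∈ degreeLT f x k := by
  suffices absorb : ∀ k, ∀ r ∈ degreeLT f x k, ∃ l, s * r ∈ degreeLT f x l by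
    obtain ⟨l, hl⟩ := absorb 1 1 (by simpa using pow_mul_map_mem_degreeLT (f := f) (x := x) 0 1)
    exact ⟨l, by simpa using hl⟩
  have hs : s ∈ Subring.closure (Set.range f ∪ {x}) := hgen ▸ Subring.mem_top s
  induction hs using Subring.closure_induction with
  | mem y hy =>
    intro k r hr
    rcases hy with ⟨t, rfl⟩ | rfl
    · exact ⟨k, h.map_mul_mem_degreeLT hr t⟩
    · exact ⟨k + 1, gen_mul_mem_degreeLT hr⟩
  | zero => exact fun k r _ ↦ ⟨0, by simp [zero_mem]⟩
  | one => exact fun k r hr ↦ ⟨k, by simpa using hr⟩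
  | add y z _ _ hy hz =>
    intro k r hr
    obtain ⟨l, hl⟩ := hy k r hr
    obtain ⟨m, hm⟩ := hz k r hr
    exact ⟨l ⊔ m, add_mul y z r ▸
      add_mem (degreeLT_mono le_sup_left hl) (degreeLT_mono le_sup_right hm)⟩
  | neg y _ hy =>
    intro k r hr
    obtain ⟨l, hl⟩ := hy k r hr
    exact ⟨l, neg_mul y r ▸ neg_mem hl⟩
  | mul y z _ _ hy hz =>
    intro k r hr
    obtain ⟨l, hl⟩ := hz k r hr
    exact mul_assoc y z r ▸ hy l _ hl

/-- The ideal of leading coefficients of the elements `x ^ k * f t + ⋯` of a left ideal. -/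
def leadingIdeal (I : Ideal S) (k : ℕ) : Ideal T where
  carrier := {t | ∃ s ∈ I, s - x ^ k * f t ∈ degreeLT f x k}
  zero_mem' := ⟨0, zero_mem I, by simp [zero_mem]⟩
  add_mem' := by
    rintro t t' ⟨s, hs, hst⟩ ⟨s', hs', hst'⟩
    exact ⟨s + s', add_mem hs hs', by
      simpa [mul_add, add_sub_add_comm] using add_mem hst hst'⟩
  smul_mem' := by
    rintro c t ⟨s, hs, hst⟩
    obtain ⟨c', hc'⟩ := h.exists_map_mul_pow_sub_pow_mul_map_mem k c
    refine ⟨f c' * s, I.mul_mem_left _ hs, ?_⟩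
    have expand : f c' * s - x ^ k * f (c • t) =
        f c' * (s - x ^ k * f t) + (f c' * x ^ k - x ^ k * f c) * f t := by
      rw [smul_eq_mul, map_mul]; noncomm_ring
    rw [expand]
    exact add_mem (h.map_mul_mem_degreeLT hst c') (mul_map_mem_degreeLT hc' t)

lemma monotone_leadingIdeal (I : Ideal S) : Monotone (h.leadingIdeal I) :=
  monotone_nat_of_le_succ fun k t ⟨s, hs, hst⟩ ↦ ⟨x * s, I.mul_mem_left x hs, by
    simpa [mul_sub, pow_succ', mul_assoc] using gen_mul_mem_degreeLT hst⟩

lemma le_of_leadingIdeal_le (hgen : Subring.closure (Set.range f ∪ {x}) = ⊤) {I J : Ideal S}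
    (hIJ : I ≤ J) (hJI : ∀ k, h.leadingIdeal J k ≤ h.leadingIdeal I k) : J ≤ I := by
  have descend (k : ℕ) : ∀ s ∈ J, s ∈ degreeLT f x k → s ∈ I := by
    induction k with
    | zero => rintro s - (rfl : s = 0); exact zero_mem I
    | succ k ih =>
      intro s hsJ hs
      obtain ⟨t, r, hr, rfl⟩ := mem_degreeLT_succ.mp hs
      obtain ⟨s', hs', hst⟩ := hJI k (show t ∈ _ from ⟨_, hsJ, by simpa using hr⟩)
      have := ih (x ^ k * f t + r - s') (sub_mem hsJ (hIJ hs'))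
        (by simpa only [sub_sub_eq_add_sub, add_comm r] using sub_mem hr hst)
      simpa using add_mem this hs'
  intro s hs
  obtain ⟨k, hk⟩ := h.exists_mem_degreeLT hgen s
  exact descend k s hs hk

theorem isNoetherianRing [IsNoetherianRing T]
    (hgen : Subring.closure (Set.range f ∪ {x}) = ⊤) : IsNoetherianRing S := by
  let leading (I : Ideal S) : ℕ →o Ideal T := ⟨h.leadingIdeal I, h.monotone_leadingIdeal I⟩
  have strictMono_leading : StrictMono leading := fun I J hIJ ↦ by
    refine lt_of_le_not_ge (fun k t ⟨s, hs, hst⟩ ↦ ⟨s, hIJ.le hs, hst⟩) fun hJI ↦ ?_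
    exact hIJ.not_ge (h.le_of_leadingIdeal_le hgen hIJ.le hJI)
  exact isNoetherianRing_iff.mpr (isNoetherian_iff'.mpr strictMono_leading.wellFoundedGT)

theorem isNoetherianRing_closure [IsNoetherianRing T] :
    IsNoetherianRing (Subring.closure (Set.range f ∪ {x})) := by
  set B := Subring.closure (Set.range f ∪ {x}) with hB
  have map_mem (t : T) : f t ∈ B := Subring.subset_closure (Or.inl ⟨t, rfl⟩)
  have gen_mem : x ∈ B := Subring.subset_closure (Or.inr rfl)
  have hf : IsAlmostNormalizing (f.codRestrict B map_mem) ⟨x, gen_mem⟩ :=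
    { map_mul_gen := fun t ↦ (h.map_mul_gen t).imp fun _ ↦ .imp fun _ e ↦ Subtype.ext e
      gen_mul_map := fun t ↦ (h.gen_mul_map t).imp fun _ ↦ .imp fun _ e ↦ Subtype.ext e }
  refine hf.isNoetherianRing ?_
  have closure_le_map : B ≤ (Subring.closure
      (Set.range (f.codRestrict B map_mem) ∪ {⟨x, gen_mem⟩})).map B.subtype := by
    refine Subring.closure_le.mpr ?_
    rintro y (⟨t, rfl⟩ | rfl)
    · exact ⟨_, Subring.subset_closure (Or.inl ⟨t, rfl⟩), rfl⟩
    · exact ⟨_, Subring.subset_closure (Or.inr rfl), rfl⟩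
  refine eq_top_iff.mpr fun s _ ↦ ?_
  obtain ⟨s', hs', e⟩ := closure_le_map s.2
  rwa [← Subtype.ext (a1 := s') e]

end IsAlmostNormalizing

section Closure

variable {S : Type*} [Ring S] {X : Set S} {x s : S}

lemma exists_mul_eq_mul_add_of_mem_closure
    (hX : ∀ s ∈ X, ∃ p ∈ Subring.closure X, ∃ q ∈ Subring.closure X, s * x = x * p + q)
    (hs : s ∈ Subring.closure X) :
    ∃ p ∈ Subring.closure X, ∃ q ∈ Subring.closure X, s * x = x * p + q := by
  induction hs using Subring.closure_induction with
  | mem y hy => exact hX y hy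
  | zero => exact ⟨0, zero_mem _, 0, zero_mem _, by simp⟩
  | one => exact ⟨1, one_mem _, 0, zero_mem _, by simp⟩
  | add y z _ _ hy hz =>
    obtain ⟨p, hp, q, hq, e⟩ := hy
    obtain ⟨p', hp', q', hq', e'⟩ := hz
    exact ⟨p + p', add_mem hp hp', q + q', add_mem hq hq', by
      rw [add_mul, e, e', mul_add, add_add_add_comm]⟩
  | neg y _ hy =>
    obtain ⟨p, hp, q, hq, e⟩ := hy
    exact ⟨-p, neg_mem hp, -q, neg_mem hq, by rw [neg_mul, e, mul_neg, neg_add]⟩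
  | mul y z hy_mem _ hy hz =>
    obtain ⟨p, hp, q, hq, e⟩ := hy
    obtain ⟨p', hp', q', hq', e'⟩ := hz
    refine ⟨p * p', mul_mem hp hp', q * p' + y * q',
      add_mem (mul_mem hq hp') (mul_mem hy_mem hq'), ?_⟩
    rw [mul_assoc, e', mul_add, ← mul_assoc, e]
    noncomm_ring

lemma exists_mul_eq_add_mul_of_mem_closure
    (hX : ∀ s ∈ X, ∃ p ∈ Subring.closure X, ∃ q ∈ Subring.closure X, x * s = p * x + q)
    (hs : s ∈ Subring.closure X) :
    ∃ p ∈ Subring.closure X, ∃ q ∈ Subring.closure X, x * s = p * x + q := by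
  induction hs using Subring.closure_induction with
  | mem y hy => exact hX y hy
  | zero => exact ⟨0, zero_mem _, 0, zero_mem _, by simp⟩
  | one => exact ⟨1, one_mem _, 0, zero_mem _, by simp⟩
  | add y z _ _ hy hz =>
    obtain ⟨p, hp, q, hq, e⟩ := hy
    obtain ⟨p', hp', q', hq', e'⟩ := hz
    exact ⟨p + p', add_mem hp hp', q + q', add_mem hq hq', by
      rw [mul_add, e, e', add_mul, add_add_add_comm]⟩
  | neg y _ hy =>
    obtain ⟨p, hp, q, hq, e⟩ := hy
    exact ⟨-p, neg_mem hp, -q, neg_mem hq, by rw [mul_neg, e, neg_mul, neg_add]⟩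
  | mul y z _ hz_mem hy hz =>
    obtain ⟨p, hp, q, hq, e⟩ := hy
    obtain ⟨p', hp', q', hq', e'⟩ := hz
    refine ⟨p * p', mul_mem hp hp', p * q' + q * z,
      add_mem (mul_mem hp hq') (mul_mem hq hz_mem), ?_⟩
    rw [← mul_assoc, e, add_mul, mul_assoc p, e']
    noncomm_ring

lemma isAlmostNormalizing_subtype_closure
    (hXx : ∀ s ∈ X, ∃ p ∈ Subring.closure X, ∃ q ∈ Subring.closure X, s * x = x * p + q)
    (hxX : ∀ s ∈ X, ∃ p ∈ Subring.closure X, ∃ q ∈ Subring.closure X, x * s = p * x + q) :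
    IsAlmostNormalizing (Subring.closure X).subtype x where
  map_mul_gen t := by
    obtain ⟨p, hp, q, hq, e⟩ := exists_mul_eq_mul_add_of_mem_closure hXx t.2
    exact ⟨⟨p, hp⟩, ⟨q, hq⟩, e⟩
  gen_mul_map t := by
    obtain ⟨p, hp, q, hq, e⟩ := exists_mul_eq_add_mul_of_mem_closure hxX t.2
    exact ⟨⟨p, hp⟩, ⟨q, hq⟩, e⟩

end Closure

end HilbertBasis

open MvPolynomial in
/-- The automorphism `x ↦ y`, `y ↦ a y + b x + g` of `R[x, y]`, where `x = X 0` and `y = X 1`. In a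
down-up algebra `x` stands for `u d` and `y` for `d u`, and conjugation by `u` or `d` acts on them
by this automorphism. -/
def weightAut {R : Type*} [CommRing R] (a : R) (b : Rˣ) (g : R) :
    MvPolynomial (Fin 2) R ≃ₐ[R] MvPolynomial (Fin 2) R :=
  .ofAlgHom (aeval ![X 1, a • X 1 + (b : R) • X 0 + C g])
    (aeval ![(↑b⁻¹ : R) • (X 1 - a • X 0 - C g), X 0])
    (by
      ext i : 1
      fin_cases i
      · simp [smul_smul, -algebraMap_eq, add_sub_right_comm]
      · simp)
    (by
      ext i : 1
      fin_cases i
      · simp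
      · simp [smul_smul, ← add_sub_assoc])

section WeightAut

open MvPolynomial

variable {R : Type*} [CommRing R] (a : R) (b : Rˣ) (g : R)

@[simp]
lemma weightAut_X_zero : weightAut a b g (X 0) = X 1 := by simp [weightAut]

@[simp]
lemma weightAut_X_one : weightAut a b g (X 1) = a • X 1 + (b : R) • X 0 + C g := by
  simp [weightAut]

@[simp]
lemma weightAut_C (c : R) : weightAut a b g (C c) = C c :=
  (weightAut a b g).commutes c

end WeightAut

/-- The elements `u` and `d` satisfy the defining relations of the down-up algebra `A(a, b, g)`. -/
structure IsDownUpPair {R S : Type*} [CommRing R] [Ring S] [Algebra R S] (a b g : R) (u d : S) :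
    Prop where
  mul_up_up : d * u * u = a • (u * d * u) + b • (u * u * d) + g • u
  down_down_mul : d * d * u = a • (d * u * d) + b • (u * d * d) + g • d

namespace IsDownUpPair

section Relations

variable {R S : Type*} [CommRing R] [Ring S] [Algebra R S] {a b g : R} {u d : S}
  (h : IsDownUpPair a b g u d)

include h

lemma op : IsDownUpPair a b g (MulOpposite.op d) (MulOpposite.op u) where
  mul_up_up := MulOpposite.unop_injective (by simpa [mul_assoc] using h.down_down_mul)
  down_down_mul := MulOpposite.unop_injective (by simpa [mul_assoc] using h.mul_up_up)

lemma commute_up_mul_down : Commute (u * d) (d * u) := by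
  calc u * d * (d * u) = u * (d * d * u) := by noncomm_ring
    _ = d * u * u * d := by
      simp only [h.mul_up_up, h.down_down_mul, mul_add, add_mul, mul_smul_comm, smul_mul_assoc,
        mul_assoc]
    _ = d * u * (u * d) := by noncomm_ring

/-- The homomorphism `R[x, y] → S` with `x ↦ u d` and `y ↦ d u`. It takes values in the
commutative subalgebra generated by `u d` and `d u`, since Mathlib's `MvPolynomial.aeval` asks for a
commutative target. -/
def weightHom : MvPolynomial (Fin 2) R →ₐ[R] S :=
  have comm : ∀ s ∈ ({u * d, d * u} : Set S), ∀ t ∈ ({u * d, d * u} : Set S), s * t = t * s := by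
    rintro _ (rfl | rfl) _ (rfl | rfl)
    exacts [rfl, h.commute_up_mul_down, h.commute_up_mul_down.symm, rfl]
  have := Algebra.isMulCommutative_adjoin R comm
  letI : CommRing (Algebra.adjoin R {u * d, d * u}) := { mul_comm := this.is_comm.comm }
  (Algebra.adjoin R {u * d, d * u}).val.comp (MvPolynomial.aeval
    ![⟨u * d, Algebra.subset_adjoin (by simp)⟩, ⟨d * u, Algebra.subset_adjoin (by simp)⟩])

@[simp]
lemma weightHom_X_zero : h.weightHom (MvPolynomial.X 0) = u * d := by simp [weightHom]

@[simp]
lemma weightHom_X_one : h.weightHom (MvPolynomial.X 1) = d * u := by simp [weightHom]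

end Relations

section Weights

open MvPolynomial

variable {R S : Type*} [CommRing R] [Ring S] [Algebra R S] {a : R} {b : Rˣ} {g : R} {u d : S}
  (h : IsDownUpPair a ↑b g u d)

@[simp]
lemma weightHom_C {b : R} (h : IsDownUpPair a b g u d) (c : R) :
    h.weightHom (C c) = algebraMap R S c :=
  h.weightHom.commutes c

lemma weightHom_mul_up (r : MvPolynomial (Fin 2) R) :
    h.weightHom r * u = u * h.weightHom (weightAut a b g r) := by
  induction r using MvPolynomial.induction_on with
  | C c => simp [Algebra.commutes]
  | add p q hp hq => simp only [map_add, add_mul, mul_add, hp, hq]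
  | mul_X p i hp =>
    have hX : h.weightHom (X i) * u = u * h.weightHom (weightAut a b g (X i)) := by
      fin_cases i
      · simp [mul_assoc]
      · simp [h.mul_up_up, mul_add, mul_assoc, Algebra.smul_def g, Algebra.commutes g]
    rw [map_mul, map_mul, map_mul, mul_assoc, hX, ← mul_assoc, hp, mul_assoc]

lemma down_mul_weightHom (r : MvPolynomial (Fin 2) R) :
    d * h.weightHom r = h.weightHom (weightAut a b g r) * d := by
  induction r using MvPolynomial.induction_on with
  | C c => simp [Algebra.commutes]
  | add p q hp hq => simp only [map_add, add_mul, mul_add, hp, hq]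
  | mul_X p i hp =>
    have hX : d * h.weightHom (X i) = h.weightHom (weightAut a b g (X i)) * d := by
      fin_cases i
      · simp [mul_assoc]
      · simp [← mul_assoc, h.down_down_mul, add_mul, Algebra.smul_def g]
    rw [map_mul, map_mul, map_mul, ← mul_assoc, hp, mul_assoc, hX, mul_assoc]

lemma isAlmostNormalizing_up :
    IsAlmostNormalizing (h.weightHom : MvPolynomial (Fin 2) R →+* S) u where
  map_mul_gen r := ⟨weightAut a b g r, 0, by simpa using h.weightHom_mul_up r⟩
  gen_mul_map r := ⟨(weightAut a b g).symm r, 0, by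
    simpa using (h.weightHom_mul_up ((weightAut a b g).symm r)).symm⟩

lemma isAlmostNormalizing_down : IsAlmostNormalizing
    (Subring.closure (Set.range (h.weightHom : MvPolynomial (Fin 2) R →+* S) ∪ {u})).subtype d := by
  have weight_mem (r) : h.weightHom r ∈ Subring.closure
      (Set.range (h.weightHom : MvPolynomial (Fin 2) R →+* S) ∪ {u}) :=
    Subring.subset_closure (Or.inl ⟨r, rfl⟩)
  refine isAlmostNormalizing_subtype_closure ?_ ?_
  · rintro s (⟨r, rfl⟩ | rfl)
    · exact ⟨_, weight_mem ((weightAut a b g).symm r), 0, zero_mem _, by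
        simp [h.down_mul_weightHom]⟩
    · exact ⟨0, zero_mem _, _, weight_mem (X 0), by simp⟩
  · rintro s (⟨r, rfl⟩ | rfl)
    · exact ⟨_, weight_mem (weightAut a b g r), 0, zero_mem _, by
        simp [h.down_mul_weightHom]⟩
    · exact ⟨0, zero_mem _, _, weight_mem (X 1), by simp⟩

include h in
theorem isNoetherianRing [IsNoetherianRing R] (hgen : Algebra.adjoin R {u, d} = ⊤) :
    IsNoetherianRing S := by
  have := h.isAlmostNormalizing_up.isNoetherianRing_closure
  refine h.isAlmostNormalizing_down.isNoetherianRing (eq_top_iff.mpr fun s _ ↦ ?_)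
  have hs : s ∈ (Algebra.adjoin R {u, d}).toSubring := hgen ▸ Algebra.mem_top (R := R)
  rw [Algebra.adjoin_eq_ring_closure] at hs
  refine Subring.closure_mono ?_ hs
  simp only [Set.union_subset_iff, Set.insert_subset_iff, Set.singleton_subset_iff]
  refine ⟨?_, Or.inl ⟨⟨u, Subring.subset_closure (Or.inr rfl)⟩, rfl⟩, Or.inr rfl⟩
  rintro _ ⟨c, rfl⟩
  exact Or.inl ⟨⟨_, Subring.subset_closure (Or.inl ⟨C c, rfl⟩)⟩, h.weightHom_C c⟩

end Weights

end IsDownUpPair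

section Filtrations

variable {A L M N ι : Type*} [Ring A] [AddCommGroup L] [Module A L] [AddCommGroup M] [Module A M]
  [AddCommGroup N] [Module A N]

/-- An exhaustive filtration of a ring, indexed by `ℤ` and vanishing in negative degrees. -/
structure IsPositiveFiltration (F : ℤ → AddSubgroup A) : Prop extends SetLike.GradedMonoid F where
  mono : Monotone F
  eq_bot_of_neg (k : ℤ) (hk : k < 0) : F k = ⊥
  exists_mem (x : A) : ∃ k, x ∈ F k

/-- A filtration `G` of a module over a ring filtered by `F`, where `F` acts compatibly on `G`. -/
structure IsCompatibleFiltration (F : ℤ → AddSubgroup A) (G : ℤ → AddSubgroup M) : Prop where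
  mono : Monotone G
  smul_mem {i k : ℤ} {s : A} {x : M} (hs : s ∈ F i) (hx : x ∈ G k) : s • x ∈ G (i + k)

/-- The filtration of the free module `ι → A` whose basis vector `i` has degree `d i`. -/
def shiftedFiltration (F : ℤ → AddSubgroup A) (d : ι → ℕ) (k : ℤ) : AddSubgroup (ι → A) :=
  AddSubgroup.pi Set.univ fun i ↦ F (k - d i)

/-- The filtration which a filtration of a module induces on a submodule. -/
def inducedFiltration (G : ℤ → AddSubgroup M) (N : Submodule A M) (k : ℤ) : AddSubgroup N :=
  (G k).comap N.toAddSubgroup.subtype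

/-- A linear map which is surjective on each step of the given filtrations. -/
structure IsStrictSurjection (GM : ℤ → AddSubgroup M) (GN : ℤ → AddSubgroup N) (π : M →ₗ[A] N) :
    Prop where
  map_mem {k : ℤ} {x : M} (hx : x ∈ GM k) : π x ∈ GN k
  exists_mem_eq {k : ℤ} {y : N} (hy : y ∈ GN k) : ∃ x ∈ GM k, π x = y

lemma mem_shiftedFiltration {F : ℤ → AddSubgroup A} {d : ι → ℕ} {k : ℤ} {x : ι → A} :
    x ∈ shiftedFiltration F d k ↔ ∀ i, x i ∈ F (k - d i) := by
  simp [shiftedFiltration, AddSubgroup.mem_pi]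

lemma mem_inducedFiltration {G : ℤ → AddSubgroup M} {N : Submodule A M} {k : ℤ} {x : N} :
    x ∈ inducedFiltration G N k ↔ (x : M) ∈ G k := Iff.rfl

lemma IsStrictSurjection.surjective {GM : ℤ → AddSubgroup M} {GN : ℤ → AddSubgroup N}
    {π : M →ₗ[A] N} (hπ : IsStrictSurjection GM GN π) (hGN : ∀ y, ∃ k, y ∈ GN k) :
    Function.Surjective π := fun y ↦
  have ⟨_, hk⟩ := hGN y
  have ⟨x, _, hx⟩ := hπ.exists_mem_eq hk
  ⟨x, hx⟩

namespace IsPositiveFiltration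

variable {F : ℤ → AddSubgroup A} (h : IsPositiveFiltration F)

include h

lemma isCompatibleFiltration_shifted (d : ι → ℕ) :
    IsCompatibleFiltration F (shiftedFiltration F d) where
  mono _ _ hkl _ hx := mem_shiftedFiltration.mpr fun i ↦ h.mono (by lia)
    (mem_shiftedFiltration.mp hx i)
  smul_mem hs hx := mem_shiftedFiltration.mpr fun i ↦ by
    simpa only [add_sub_assoc, Pi.smul_apply, smul_eq_mul] using
      h.mul_mem hs (mem_shiftedFiltration.mp hx i)

lemma exists_mem_shiftedFiltration [Finite ι] (d : ι → ℕ) (x : ι → A) :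
    ∃ k, x ∈ shiftedFiltration F d k := by
  choose k hk using fun i ↦ h.exists_mem (x i)
  obtain ⟨l, hl⟩ := Set.Finite.bddAbove (Set.finite_range fun i ↦ k i + d i)
  exact ⟨l, mem_shiftedFiltration.mpr fun i ↦ h.mono (le_sub_iff_add_le.mpr (hl ⟨i, rfl⟩))
    (hk i)⟩

lemma shiftedFiltration_eq_bot_of_neg (d : ι → ℕ) {k : ℤ} (hk : k < 0) :
    shiftedFiltration F d k = ⊥ :=
  (AddSubgroup.eq_bot_iff_forall _).mpr fun x hx ↦ funext fun i ↦
    by simpa [h.eq_bot_of_neg _ (show k - d i < 0 by lia)] using mem_shiftedFiltration.mp hx i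

end IsPositiveFiltration

lemma IsCompatibleFiltration.induced {F : ℤ → AddSubgroup A} {G : ℤ → AddSubgroup M}
    (h : IsCompatibleFiltration F G) (N : Submodule A M) :
    IsCompatibleFiltration F (inducedFiltration G N) where
  mono _ _ hkl _ hx := h.mono hkl hx
  smul_mem hs hx := h.smul_mem hs hx

end Filtrations

section GradedExactness

variable {A M N p q r q' : Type*} [Ring A] [AddCommGroup M] [Module A M] [AddCommGroup N]
  [Module A N] [Fintype q] [Fintype r] [Fintype q']

/-- The action of a matrix over `A` on column vectors with entries in an `A`-module. -/
def smulVec (B : Matrix p q A) : (q → M) →+ (p → M) where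
  toFun x i := ∑ j, B i j • x j
  map_zero' := by ext; simp
  map_add' x y := by ext; simp [Finset.sum_add_distrib]

lemma smulVec_apply (B : Matrix p q A) (x : q → M) (i : p) : smulVec B x i = ∑ j, B i j • x j := rfl

lemma smulVec_smulVec (B : Matrix p q A) (C : Matrix q r A) (x : r → M) :
    smulVec B (smulVec C x) = smulVec (B * C) x := by
  ext i
  simp only [smulVec_apply, Matrix.mul_apply, Finset.smul_sum, Finset.sum_smul, mul_smul]
  exact Finset.sum_comm

lemma map_smulVec (π : M →ₗ[A] N) (B : Matrix p q A) (x : q → M) (i : p) :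
    π (smulVec B x i) = smulVec B (π ∘ x) i := by simp [smulVec_apply]

lemma IsCompatibleFiltration.smulVec_mem {F : ℤ → AddSubgroup A} {G : ℤ → AddSubgroup M}
    (h : IsCompatibleFiltration F G) {B : Matrix p q A} {s k : ℤ} (hB : ∀ i j, B i j ∈ F s)
    {x : q → M} (hx : ∀ j, x j ∈ G k) (i : p) : smulVec B x i ∈ G (s + k) :=
  (G _).sum_mem fun j _ ↦ h.smul_mem (hB i j) (hx j)

/-- Exactness in the middle of the complex `gr(G)^r → gr(G)^q → gr(G)^p` of graded modules whose
maps are given by matrices `C` of degree `t` and `B` of degree `s`, in terms of representatives. -/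
def IsGradedExact (G : ℤ → AddSubgroup M) (B : Matrix p q A) (s : ℤ) (C : Matrix q r A) (t : ℤ) :
    Prop :=
  ∀ (k : ℤ) (x : q → M), (∀ j, x j ∈ G k) → (∀ i, smulVec B x i ∈ G (s + k - 1)) →
    ∃ y : r → M, (∀ l, y l ∈ G (k - t)) ∧ ∀ j, x j - smulVec C y j ∈ G (k - 1)

namespace IsGradedExact

variable {F : ℤ → AddSubgroup A} {GM : ℤ → AddSubgroup M} {GN : ℤ → AddSubgroup N}
  {B : Matrix p q A} {s : ℤ} {C : Matrix q r A} {t : ℤ} {D : Matrix r q' A} {e : ℤ} {π : M →ₗ[A] N}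

lemma shift {ι : Type*} (h : IsGradedExact F B s C t) (d : ι → ℕ) :
    IsGradedExact (shiftedFiltration F d) B s C t := by
  intro k x hx hBx
  have coordinate (i : ι) := h (k - d i) (x · i) (fun j ↦ mem_shiftedFiltration.mp (hx j) i)
    fun j ↦ by
      rw [← add_sub_assoc, sub_right_comm]
      exact map_smulVec (LinearMap.proj i) B x j ▸ mem_shiftedFiltration.mp (hBx j) i
  choose y hy hxy using coordinate
  refine ⟨fun l i ↦ y i l, fun l ↦ mem_shiftedFiltration.mpr fun i ↦ ?_,
    fun j ↦ mem_shiftedFiltration.mpr fun i ↦ ?_⟩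
  · exact sub_right_comm k t (d i) ▸ hy i l
  · rw [sub_right_comm, Pi.sub_apply, show smulVec C (fun l i ↦ y i l) j i = smulVec C (y i) j from
      map_smulVec (LinearMap.proj i : (ι → A) →ₗ[A] A) C (fun l i ↦ y i l) j]
    exact hxy i j

lemma induced [IsEmpty r] (h : IsGradedExact GM B s C t) (P : Submodule A M) :
    IsGradedExact (inducedFiltration GM P) B s C t := by
  intro k x hx hBx
  obtain ⟨y, -, hxy⟩ := h k (fun j ↦ x j) hx fun i ↦ by
    exact map_smulVec P.subtype B x i ▸ hBx i
  refine ⟨isEmptyElim, isEmptyElim, fun j ↦ ?_⟩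
  simpa [smulVec_apply, mem_inducedFiltration] using hxy j

omit [Fintype q] in
lemma exists_ker_sub_mem (hN : IsGradedExact GN C t D e) (hπ : IsStrictSurjection GM GN π)
    (hM : IsCompatibleFiltration F GM) (hC : ∀ i j, C i j ∈ F t) (hD : ∀ i j, D i j ∈ F e)
    (hCD : C * D = 0) {k : ℤ} {y : r → M} (hy : ∀ j, y j ∈ GM k)
    (hCy : ∀ i, π (smulVec C y i) ∈ GN (t + k - 1)) :
    ∃ y' : r → M, (∀ j, y' j ∈ GM k) ∧ (∀ j, π (y' j) = 0) ∧
      ∀ i, smulVec C (y - y') i ∈ GM (t + k - 1) := by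
  obtain ⟨z, hz, hyz⟩ := hN k (π ∘ y) (fun j ↦ hπ.map_mem (hy j)) fun i ↦ by
    simpa only [map_smulVec] using hCy i
  choose z' hz' hπz' using fun l ↦ hπ.exists_mem_eq (hz l)
  obtain rfl : π ∘ z' = z := funext hπz'
  have hDz' (j) : smulVec D z' j ∈ GM k := by simpa using hM.smulVec_mem hD hz' j
  choose w hw hπw using fun j ↦ hπ.exists_mem_eq (hyz j)
  refine ⟨y - smulVec D z' - w, fun j ↦ ?_, fun j ↦ ?_, fun i ↦ ?_⟩
  · exact sub_mem (sub_mem (hy j) (hDz' j)) (hM.mono (by lia) (hw j))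
  · simp [hπw, map_smulVec]
  · rw [sub_sub, sub_sub_cancel, map_add, smulVec_smulVec, hCD,
      show smulVec (0 : Matrix q q' A) z' = 0 by ext; simp [smulVec_apply], zero_add,
      add_sub_assoc]
    exact hM.smulVec_mem hC hw i

lemma ker (hM : IsGradedExact GM B s C t) (hN : IsGradedExact GN C t D e)
    (hπ : IsStrictSurjection GM GN π) (hGM : IsCompatibleFiltration F GM)
    (hC : ∀ i j, C i j ∈ F t) (hD : ∀ i j, D i j ∈ F e) (hCD : C * D = 0) :
    IsGradedExact (inducedFiltration GM (LinearMap.ker π)) B s C t := by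
  intro k x hx hBx
  obtain ⟨y, hy, hxy⟩ := hM k (fun j ↦ x j) hx fun i ↦ by
    exact map_smulVec (LinearMap.ker π).subtype B x i ▸ hBx i
  have hCy (i) : π (smulVec C y i) ∈ GN (t + (k - t) - 1) := by
    simpa [(x i).2] using neg_mem (hπ.map_mem (hxy i))
  obtain ⟨y', hy', hπy', hyy'⟩ := hN.exists_ker_sub_mem hπ hGM hC hD hCD hy hCy
  refine ⟨fun l ↦ ⟨y' l, hπy' l⟩, hy', fun j ↦ ?_⟩
  rw [mem_inducedFiltration, ← Submodule.subtype_apply, map_sub, map_smulVec]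
  have := add_mem (hxy j) (add_sub_cancel t k ▸ hyy' j)
  rwa [map_sub, Pi.sub_apply, sub_add_sub_cancel] at this

end IsGradedExact

end GradedExactness

section DimensionShift

open Module

variable {A : Type*} [Ring A]

/-- Every submodule of a finite free module, with the filtration induced by a shifted filtration, is
a strict quotient of a finite free module with a shifted filtration. -/
def IsStrictlyNoetherian (F : ℤ → AddSubgroup A) : Prop :=
  ∀ (n : ℕ) (d : Fin n → ℕ) (N : Submodule A (Fin n → A)),
    ∃ (m : ℕ) (e : Fin m → ℕ) (π : (Fin m → A) →ₗ[A] N),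
      IsStrictSurjection (shiftedFiltration F e) (inducedFiltration (shiftedFiltration F d) N) π

variable {N : Type*} [AddCommGroup N] [Module A N] {F : ℤ → AddSubgroup A}
  {G : ℤ → AddSubgroup N}

/-- Dropping a generator which is redundant because of a relation `x` with a unit entry. -/
lemma IsStrictSurjection.comp_extendByZero_succAbove (hF : IsPositiveFiltration F) {m : ℕ}
    {e : Fin (m + 1) → ℕ} {π : (Fin (m + 1) → A) →ₗ[A] N}
    (hπ : IsStrictSurjection (shiftedFiltration F e) G π) {j : Fin (m + 1)} {x : Fin (m + 1) → A}
    (hx : x ∈ shiftedFiltration F e (e j)) (hπx : π x = 0) {u : A} (hu : u ∈ F 0)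
    (hux : u * x j = 1) :
    IsStrictSurjection (shiftedFiltration F (e ∘ j.succAbove)) G
      (π ∘ₗ Function.ExtendByZero.linearMap A j.succAbove) := by
  have extend_succAbove (a : Fin m → A) (i : Fin m) :
      Function.ExtendByZero.linearMap A j.succAbove a (j.succAbove i) = a i :=
    j.succAbove_right_injective.extend_apply a 0 i
  have extend_self (a : Fin m → A) : Function.ExtendByZero.linearMap A j.succAbove a j = 0 :=
    Function.extend_apply' a (0 : Fin (m + 1) → A) j fun ⟨i, hi⟩ ↦ j.succAbove_ne i hi
  constructor
  · intro k a ha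
    refine hπ.map_mem (mem_shiftedFiltration.mpr
      ((Fin.forall_iff_succAbove j).mpr ⟨?_, fun i ↦ ?_⟩))
    · simp [extend_self, zero_mem]
    · simpa [extend_succAbove] using mem_shiftedFiltration.mp ha i
  · intro k y hy
    obtain ⟨a, ha, rfl⟩ := hπ.exists_mem_eq hy
    set a' := a - (a j * u) • x with ha'
    have ha'_mem : a' ∈ shiftedFiltration F e k := by
      have := (hF.isCompatibleFiltration_shifted e).smul_mem
        (hF.mul_mem (mem_shiftedFiltration.mp ha j) hu) hx
      exact sub_mem ha (by convert this using 1; ring_nf)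
    refine ⟨a' ∘ j.succAbove, fun i _ ↦ mem_shiftedFiltration.mp ha'_mem _, ?_⟩
    have ha'_eq : Function.ExtendByZero.linearMap A j.succAbove (a' ∘ j.succAbove) = a' :=
      funext ((Fin.forall_iff_succAbove j).mpr
        ⟨by simp [extend_self, ha', mul_assoc, hux], fun i ↦ by simp [extend_succAbove]⟩)
    rw [LinearMap.comp_apply, ha'_eq, map_sub, map_smul, hπx, smul_zero, sub_zero]

/-- The matrices `B₁`, `B₂`, `B₃` of degrees `1`, `2`, `1` induce an exact complex
`0 → gr(A)^r → gr(A)^q → gr(A)^p → gr(A) → gr(A)₀ → 0` over the associated graded ring of `A`, and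
`gr(A)₀ = F 0` is a division ring. For the down-up algebra this is a deformed Koszul resolution. -/
structure IsKoszulFiltration {p q r : Type*} [Fintype p] [Fintype q] [Fintype r]
    (F : ℤ → AddSubgroup A) (B₁ : Matrix (Fin 1) p A) (B₂ : Matrix p q A) (B₃ : Matrix q r A) :
    Prop extends IsPositiveFiltration F where
  exists_mul_eq_one (x : A) (hx : x ∈ F 0) (hx0 : x ≠ 0) : ∃ y ∈ F 0, y * x = 1
  mem₁ (i j) : B₁ i j ∈ F 1
  mem₂ (i j) : B₂ i j ∈ F 2
  mem₃ (i j) : B₃ i j ∈ F 1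
  mul₁₂ : B₁ * B₂ = 0
  mul₂₃ : B₂ * B₃ = 0
  exists_sub_mem (k : ℤ) (hk : 1 ≤ k) (x : A) (hx : x ∈ F k) :
    ∃ y : p → A, (∀ j, y j ∈ F (k - 1)) ∧ x - smulVec B₁ y 0 ∈ F (k - 1)
  exact₁ : IsGradedExact F B₁ 1 B₂ 2
  exact₂ : IsGradedExact F B₂ 2 B₃ 1
  exact₃ : IsGradedExact F B₃ 1 (0 : Matrix r (Fin 0) A) 0

namespace IsKoszulFiltration

variable {p q r : Type*} [Fintype p] [Fintype q] [Fintype r] {B₁ : Matrix (Fin 1) p A}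
  {B₂ : Matrix p q A} {B₃ : Matrix q r A} (h : IsKoszulFiltration F B₁ B₂ B₃)

include h

lemma exists_sub_smulVec_mem_shiftedFiltration {ι : Type*} {d : ι → ℕ} {k : ℕ} {x : ι → A}
    (hx : x ∈ shiftedFiltration F d k) (hxk : ∀ j, d j = k → x j = 0) :
    ∃ y : p → ι → A, (∀ l, y l ∈ shiftedFiltration F d (k - 1)) ∧
      x - smulVec B₁ y 0 ∈ shiftedFiltration F d (k - 1) := by
  have coordinate (j : ι) : ∃ y : p → A, (∀ l, y l ∈ F (k - 1 - d j)) ∧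
      x j - smulVec B₁ y 0 ∈ F (k - 1 - d j) := by
    have hxj := mem_shiftedFiltration.mp hx j
    rcases lt_trichotomy (d j) k with hlt | heq | hgt
    · simpa only [sub_right_comm] using h.exists_sub_mem _ (by lia) _ hxj
    · exact ⟨0, fun _ ↦ zero_mem _, by simp [hxk j heq, zero_mem]⟩
    · rw [h.eq_bot_of_neg _ (by lia), AddSubgroup.mem_bot] at hxj
      exact ⟨0, fun _ ↦ zero_mem _, by simp [hxj, zero_mem]⟩
  choose y hy hxy using coordinate
  refine ⟨fun l j ↦ y j l, fun l ↦ mem_shiftedFiltration.mpr fun j ↦ hy j l,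
    mem_shiftedFiltration.mpr fun j ↦ ?_⟩
  rw [Pi.sub_apply, show smulVec B₁ (fun l j ↦ y j l) 0 j = smulVec B₁ (y j) 0 from
    map_smulVec (LinearMap.proj j : (ι → A) →ₗ[A] A) B₁ (fun l j ↦ y j l) 0]
  exact hxy j

lemma injective_of_isGradedExact (hG : IsGradedExact G B₁ 1 B₂ 2) {m : ℕ} {e : Fin m → ℕ}
    {π : (Fin m → A) →ₗ[A] N} (hπ : IsStrictSurjection (shiftedFiltration F e) G π)
    (hmin : ∀ x j, x ∈ shiftedFiltration F e (e j) → π x = 0 → x j = 0) :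
    Function.Injective π := by
  have hL := h.isCompatibleFiltration_shifted e
  have vanish (k : ℕ) : ∀ x ∈ shiftedFiltration F e (k - 1), π x = 0 → x = 0 := by
    induction k with
    | zero =>
      intro x hx _
      rwa [h.shiftedFiltration_eq_bot_of_neg e (by simp)] at hx
    | succ k ih =>
      intro x hx hπx
      rw [Nat.cast_succ, add_sub_cancel_right] at hx
      obtain ⟨y, hy, hxy⟩ := h.exists_sub_smulVec_mem_shiftedFiltration hx
        fun j hj ↦ hmin x j (hj ▸ hx) hπx
      obtain ⟨y', hy', hπy', hyy'⟩ := hG.exists_ker_sub_mem hπ hL h.mem₁ h.mem₂ h.mul₁₂ hy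
        fun i ↦ by
          rw [Subsingleton.elim i 0, add_sub_cancel_left]
          simpa [hπx] using neg_mem (hπ.map_mem hxy)
      obtain rfl : y' = 0 := funext fun l ↦ ih _ (hy' l) (hπy' l)
      refine ih x ?_ hπx
      have := hyy' 0
      rw [sub_zero, add_sub_cancel_left] at this
      simpa using add_mem hxy this
  refine (injective_iff_map_eq_zero π).mpr fun x hx ↦ ?_
  obtain ⟨k, hk⟩ := h.exists_mem_shiftedFiltration e x
  exact vanish (k + 1).toNat x (hL.mono (by lia) hk) hx

lemma free_of_isGradedExact (hN : ∀ y : N, ∃ k, y ∈ G k) (hG : IsGradedExact G B₁ 1 B₂ 2)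
    (hgen : ∃ (m : ℕ) (e : Fin m → ℕ) (π : (Fin m → A) →ₗ[A] N),
      IsStrictSurjection (shiftedFiltration F e) G π) :
    Module.Finite A N ∧ Free A N := by
  classical
  obtain ⟨m, ⟨e, π, hπ⟩, minimal⟩ : ∃ m, (∃ (e : Fin m → ℕ) (π : (Fin m → A) →ₗ[A] N),
      IsStrictSurjection (shiftedFiltration F e) G π) ∧ ∀ l < m, ¬ ∃ (e : Fin l → ℕ)
      (π : (Fin l → A) →ₗ[A] N), IsStrictSurjection (shiftedFiltration F e) G π :=
    ⟨_, Nat.find_spec hgen, fun _ ↦ Nat.find_min hgen⟩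
  have hmin (x j) (hx : x ∈ shiftedFiltration F e (e j)) (hπx : π x = 0) : x j = 0 := by
    by_contra hxj
    obtain ⟨u, hu, hux⟩ := h.exists_mul_eq_one (x j)
      (by simpa using mem_shiftedFiltration.mp hx j) hxj
    obtain _ | m := m
    · exact j.elim0
    · exact minimal m m.lt_succ_self
        ⟨_, _, hπ.comp_extendByZero_succAbove h.toIsPositiveFiltration hx hπx hu hux⟩
  have equiv := LinearEquiv.ofBijective π
    ⟨h.injective_of_isGradedExact hG hπ hmin, hπ.surjective hN⟩
  exact ⟨.equiv equiv, .of_equiv equiv⟩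

theorem isStablyFree (hF : IsStrictlyNoetherian F) (P : Type*) [AddCommGroup P] [Module A P]
    [Module.Finite A P] [Projective A P] : IsStablyFree A P := by
  obtain ⟨n, f, hf⟩ := Module.Finite.exists_fin' A P
  obtain ⟨m₁, e₁, π₁, hπ₁⟩ := hF n 0 (LinearMap.ker f)
  obtain ⟨m₂, e₂, π₂, hπ₂⟩ := hF m₁ e₁ (LinearMap.ker π₁)
  have compatible {m : ℕ} (e : Fin m → ℕ) := h.isCompatibleFiltration_shifted e
  have exhaustive {m : ℕ} (e : Fin m → ℕ) (K : Submodule A (Fin m → A)) (x : K) :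
      ∃ k, x ∈ inducedFiltration (shiftedFiltration F e) K k := h.exists_mem_shiftedFiltration e x
  have exact_ker_f := (h.exact₃.shift 0).induced (LinearMap.ker f)
  have exact_ker_π₁ := (h.exact₂.shift e₁).ker exact_ker_f hπ₁ (compatible e₁) h.mem₃
    (fun _ ↦ isEmptyElim) (Matrix.mul_zero B₃)
  have exact_ker_π₂ := (h.exact₁.shift e₂).ker exact_ker_π₁ hπ₂ (compatible e₂) h.mem₂ h.mem₃
    h.mul₂₃
  obtain ⟨_, _⟩ := h.free_of_isGradedExact (exhaustive e₂ _) exact_ker_π₂ (hF m₂ e₂ _)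
  have hπ₁_surj := hπ₁.surjective (exhaustive 0 _)
  have hπ₂_surj := hπ₂.surjective (exhaustive e₁ _)
  have := projective_ker f hf
  have := projective_ker π₁ hπ₁_surj
  have := isStablyFree_of_ker π₂ hπ₂_surj
  have := isStablyFree_of_ker π₁ hπ₁_surj
  exact isStablyFree_of_ker f hf

end IsKoszulFiltration

end DimensionShift

section Rees

open Polynomial

variable {A : Type*} [Ring A] {F : ℤ → AddSubgroup A}

/-- The Rees ring `⨁ F k * X ^ k` of a positively filtered ring, as a subring of `A[X]`. -/
def reesSubring (hF : IsPositiveFiltration F) : Subring A[X] where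
  carrier := {p | ∀ k : ℕ, p.coeff k ∈ F k}
  zero_mem' k := by simp [zero_mem]
  add_mem' hp hq k := by simpa using add_mem (hp k) (hq k)
  neg_mem' hp k := by simpa using hp k
  one_mem' k := by
    rw [coeff_one]
    split_ifs with hk
    · exact hk ▸ hF.one_mem
    · exact zero_mem _
  mul_mem' hp hq k := by
    rw [coeff_mul]
    exact sum_mem fun ij hij ↦ by
      rw [← Finset.HasAntidiagonal.mem_antidiagonal.mp hij, Nat.cast_add]
      exact hF.mul_mem (hp ij.1) (hq ij.2)

lemma mem_reesSubring {hF : IsPositiveFiltration F} {p : A[X]} :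
    p ∈ reesSubring hF ↔ ∀ k : ℕ, p.coeff k ∈ F k := Iff.rfl

lemma monomial_mem_reesSubring (hF : IsPositiveFiltration F) {k : ℕ} {x : A} (hx : x ∈ F k) :
    monomial k x ∈ reesSubring hF := mem_reesSubring.mpr fun l ↦ by
  rw [coeff_monomial]
  split_ifs with hkl
  · exact hkl ▸ hx
  · exact zero_mem _

lemma coeff_mul_monomial_eq_ite (p : A[X]) (x : A) (k l : ℕ) :
    (p * monomial l x).coeff k = (if l ≤ k then p.coeff (k - l) else 0) * x := by
  rw [← C_mul_X_pow_eq_monomial, ← mul_assoc, coeff_mul_X_pow', coeff_mul_C, ite_mul, zero_mul]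

variable (hF : IsPositiveFiltration F) {n : ℕ} {d : Fin n → ℕ} {N : Submodule A (Fin n → A)}

/-- The homogeneous element `v * X ^ k` attached to an element `v` of degree at most `k` in a
submodule of a shifted free module. -/
def reesHomogenize (p : Σ k : ℕ, inducedFiltration (shiftedFiltration F d) N k) (i : Fin n) :
    reesSubring hF :=
  ⟨monomial p.1 (p.2.1.1 i), monomial_mem_reesSubring hF
    (hF.mono (sub_le_self _ (Nat.cast_nonneg (d i))) (mem_shiftedFiltration.mp p.2.2 i))⟩

lemma exists_linearCombination_eq_of_mem_span_reesHomogenize {m : ℕ}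
    {g : Fin m → Σ k : ℕ, inducedFiltration (shiftedFiltration F d) N k}
    {p : Σ k : ℕ, inducedFiltration (shiftedFiltration F d) N k} (hp : reesHomogenize hF p ∈
      Submodule.span (reesSubring hF) (Set.range fun j ↦ reesHomogenize hF (g j))) :
    ∃ a ∈ shiftedFiltration F (fun j ↦ (g j).1) p.1,
      Fintype.linearCombination A (fun j ↦ (g j).2.1) a = p.2.1 := by
  obtain ⟨b, hb⟩ := (Submodule.mem_span_range_iff_exists_fun _).mp hp
  refine ⟨fun j ↦ if (g j).1 ≤ p.1 then (b j).1.coeff (p.1 - (g j).1) else 0,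
    mem_shiftedFiltration.mpr fun j ↦ ?_, ?_⟩
  · split_ifs with hjk
    · exact Nat.cast_sub (R := ℤ) hjk ▸ (b j).2 _
    · exact zero_mem _
  · ext i
    have hbi : (∑ j, (b j).1 * monomial (g j).1 ((g j).2.1.1 i)) = monomial p.1 (p.2.1.1 i) := by
      simpa [reesHomogenize] using congrArg Subtype.val (congrFun hb i)
    have := congrArg (Polynomial.coeff · p.1) hbi
    simp only [finsetSum_coeff, coeff_mul_monomial_eq_ite, coeff_monomial_same] at this
    simpa only [Fintype.linearCombination_apply, Submodule.coe_sum, Submodule.coe_smul,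
      Finset.sum_apply, Pi.smul_apply, smul_eq_mul] using this

variable (d N) in
lemma exists_reesHomogenize_mem_span [IsNoetherianRing (reesSubring hF)] :
    ∃ (m : ℕ) (g : Fin m → Σ k : ℕ, inducedFiltration (shiftedFiltration F d) N k),
      ∀ p : Σ k : ℕ, inducedFiltration (shiftedFiltration F d) N k, reesHomogenize hF p ∈
        Submodule.span (reesSubring hF) (Set.range fun j ↦ reesHomogenize hF (g j)) := by
  obtain ⟨s, hs, hspan⟩ := (Submodule.fg_span_iff_fg_span_finset_subset _).mp
    (IsNoetherian.noetherian (Submodule.span (reesSubring hF)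
      (Set.range (reesHomogenize hF (d := d) (N := N)))))
  choose g hg using fun j ↦ hs (s.equivFin.symm j).2
  refine ⟨s.card, g, fun p ↦ ?_⟩
  rw [show (fun j ↦ reesHomogenize hF (g j)) = Subtype.val ∘ s.equivFin.symm from funext hg,
    s.equivFin.symm.surjective.range_comp, Subtype.range_coe_subtype]
  exact hspan.le (Submodule.subset_span ⟨p, rfl⟩)

theorem isStrictlyNoetherian_of_isNoetherianRing_reesSubring [IsNoetherianRing (reesSubring hF)] :
    IsStrictlyNoetherian F := by
  intro n d N
  obtain ⟨m, g, hg⟩ := exists_reesHomogenize_mem_span hF d N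
  refine ⟨m, fun j ↦ (g j).1, Fintype.linearCombination A fun j ↦ (g j).2.1, ?_, ?_⟩
  · intro k a ha
    rw [Fintype.linearCombination_apply]
    refine sum_mem fun j _ ↦ ?_
    have := ((hF.isCompatibleFiltration_shifted d).induced N).smul_mem
      (mem_shiftedFiltration.mp ha j) (g j).2.2
    rwa [sub_add_cancel] at this
  · intro k y hy
    rcases lt_or_ge k 0 with hk | hk
    · rw [mem_inducedFiltration, hF.shiftedFiltration_eq_bot_of_neg d hk] at hy
      exact ⟨0, zero_mem _, (map_zero _).trans (Subtype.ext hy.symm)⟩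
    · lift k to ℕ using hk
      exact exists_linearCombination_eq_of_mem_span_reesHomogenize hF (hg ⟨k, y, hy⟩)

end Rees

section ReesDownUp

open Polynomial

variable {R A : Type*} [CommRing R] [Ring A] [Algebra R A] {F : ℤ → AddSubgroup A}
  (hF : IsPositiveFiltration F)

/-- The `R[X]`-algebra structure of the Rees ring. Mathlib has no instance `Algebra R[X] A[X]` for a
noncommutative `R`-algebra `A` from which it could be restricted. -/
abbrev reesSubringAlgebra (hR : ∀ c, algebraMap R A c ∈ F 0) : Algebra R[X] (reesSubring hF) :=
  RingHom.toAlgebra' ((mapRingHom (algebraMap R A)).codRestrict (reesSubring hF) fun p k ↦ by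
    rw [coe_mapRingHom, coeff_map]
    exact hF.mono (Nat.cast_nonneg k) (hR _)) fun p q ↦ Subtype.ext <| by
      change Commute (p.map (algebraMap R A)) q.1
      induction p using Polynomial.induction_on' with
      | add p₁ p₂ h₁ h₂ => simpa using h₁.add_left h₂
      | monomial n c =>
        rw [map_monomial, ← C_mul_X_pow_eq_monomial]
        refine Commute.mul_left ?_ ((commute_X _).pow_left n)
        ext k
        simp [Algebra.commutes]

lemma coe_rees_smul (hR : ∀ c, algebraMap R A c ∈ F 0) (p : R[X]) (q : reesSubring hF) :
    let := reesSubringAlgebra hF hR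
    ((p • q : reesSubring hF) : A[X]) = p.map (algebraMap R A) * q := rfl

lemma IsDownUpPair.rees {a b g : R} {u d : A} (h : IsDownUpPair a b g u d) (hu : u ∈ F 1)
    (hd : d ∈ F 1) (hR : ∀ c, algebraMap R A c ∈ F 0) :
    let := reesSubringAlgebra hF hR
    IsDownUpPair (C a) (C b) (C g * X ^ 2)
      (⟨monomial 1 u, monomial_mem_reesSubring hF hu⟩ : reesSubring hF)
      ⟨monomial 1 d, monomial_mem_reesSubring hF hd⟩ := by
  intro
  have up_rel := h.mul_up_up
  have down_rel := h.down_down_mul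
  simp only [mul_assoc, Algebra.smul_def] at up_rel down_rel
  constructor <;> refine Subtype.ext ?_ <;>
    simp only [coe_rees_smul, Subring.coe_add, Subring.coe_mul, monomial_mul_monomial,
      Polynomial.map_mul, Polynomial.map_pow, map_C, map_X, C_mul_monomial, mul_assoc,
      X_pow_mul_monomial, up_rel, down_rel, map_add, add_assoc, one_add_one_eq_two,
      add_comm 1 2]

lemma adjoin_rees_eq_top {u d : A} (hu : u ∈ F 1) (hd : d ∈ F 1)
    (hF₀ : ∀ x, x ∈ F 0 ↔ x ∈ Set.range (algebraMap R A))
    (hgen : ∀ k : ℤ, 1 ≤ k → ∀ x ∈ F k, ∃ y ∈ F (k - 1), ∃ z ∈ F (k - 1),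
      x - (u * y + d * z) ∈ F (k - 1)) :
    let := reesSubringAlgebra hF fun c ↦ (hF₀ _).mpr ⟨c, rfl⟩
    Algebra.adjoin R[X] {(⟨monomial 1 u, monomial_mem_reesSubring hF hu⟩ : reesSubring hF),
      ⟨monomial 1 d, monomial_mem_reesSubring hF hd⟩} = ⊤ := by
  intro
  set S := Algebra.adjoin R[X] {(⟨monomial 1 u, monomial_mem_reesSubring hF hu⟩ : reesSubring hF),
    ⟨monomial 1 d, monomial_mem_reesSubring hF hd⟩}
  have monomial_mem (k : ℕ) : ∀ x (hx : x ∈ F k),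
      (⟨monomial k x, monomial_mem_reesSubring hF hx⟩ : reesSubring hF) ∈ S := by
    induction k with
    | zero =>
      intro x hx
      obtain ⟨c, rfl⟩ := (hF₀ x).mp hx
      convert S.algebraMap_mem (C c)
      exact (map_C (algebraMap R A)).symm
    | succ k ih =>
      intro x hx
      obtain ⟨y, hy, z, hz, hw⟩ := hgen (k + 1) (by omega) x (by exact_mod_cast hx)
      rw [add_sub_cancel_right] at hy hz hw
      convert add_mem (add_mem (mul_mem (Algebra.subset_adjoin (Set.mem_insert _ _)) (ih y hy))
        (mul_mem (Algebra.subset_adjoin (Set.mem_insert_of_mem _ rfl)) (ih z hz)))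
        (S.smul_mem (ih _ hw) X) using 1
      refine Subtype.ext ?_
      simp only [coe_rees_smul, Subring.coe_add, Subring.coe_mul, monomial_mul_monomial, map_X,
        X_mul_monomial, ← map_add, add_comm 1 k, add_sub_cancel]
  refine eq_top_iff.mpr fun p _ ↦ ?_
  convert sum_mem (t := p.1.support) fun k _ ↦ monomial_mem k _ (p.2 k)
  refine Subtype.ext ?_
  simpa using p.1.as_sum_support

theorem IsDownUpPair.isStrictlyNoetherian [IsNoetherianRing R] {a : R} {b : Rˣ} {g : R} {u d : A}
    (h : IsDownUpPair a ↑b g u d) (hF : IsPositiveFiltration F) (hu : u ∈ F 1) (hd : d ∈ F 1)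
    (hF₀ : ∀ x, x ∈ F 0 ↔ x ∈ Set.range (algebraMap R A))
    (hgen : ∀ k : ℤ, 1 ≤ k → ∀ x ∈ F k, ∃ y ∈ F (k - 1), ∃ z ∈ F (k - 1),
      x - (u * y + d * z) ∈ F (k - 1)) : IsStrictlyNoetherian F := by
  have hR (c : R) : algebraMap R A c ∈ F 0 := (hF₀ _).mpr ⟨c, rfl⟩
  let := reesSubringAlgebra hF hR
  have := isNoetherianRing (b := Units.map (C : R →+* R[X]) b)
    (h.rees hF hu hd hR) (adjoin_rees_eq_top hF hu hd hF₀ hgen)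
  exact isStrictlyNoetherian_of_isNoetherianRing_reesSubring hF

end ReesDownUp

section Koszul

variable {R S : Type*} [CommRing R] [Ring S] [Algebra R S] (a b g : R) (u d : S)

/-- The first map of the Koszul complex of a down-up algebra: the row of generators. -/
def koszulMatrix₁ : Matrix (Fin 1) (Fin 2) S := !![u, d]

/-- The second map of the Koszul complex of a down-up algebra: its columns express the two defining
relations in terms of `koszulMatrix₁`. -/
def koszulMatrix₂ : Matrix (Fin 2) (Fin 2) S :=
  !![-(a • (d * u) + b • (u * d) + g • 1), -(b • (d * d));
     u * u, d * u - a • (u * d) - g • 1]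

/-- The third map of the Koszul complex of a down-up algebra. -/
def koszulMatrix₃ : Matrix (Fin 2) (Fin 1) S := !![-(b • d); u]

variable {a b g u d} (h : IsDownUpPair a b g u d)

include h

lemma IsDownUpPair.koszulMatrix₁_mul_koszulMatrix₂ :
    koszulMatrix₁ u d * koszulMatrix₂ a b g u d = 0 := by
  ext i j
  fin_cases i; fin_cases j
  · have := h.mul_up_up
    simp only [mul_assoc] at this
    simp [koszulMatrix₁, koszulMatrix₂, mul_add, this]
    abel
  · have := h.down_down_mul
    simp only [mul_assoc] at this
    simp [koszulMatrix₁, koszulMatrix₂, mul_sub, this]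
    abel

lemma IsDownUpPair.koszulMatrix₂_mul_koszulMatrix₃ :
    koszulMatrix₂ a b g u d * koszulMatrix₃ b u d = 0 := by
  ext i j
  fin_cases j; fin_cases i
  · simp [koszulMatrix₂, koszulMatrix₃, add_mul, h.down_down_mul]
  · simp [koszulMatrix₂, koszulMatrix₃, sub_mul, h.mul_up_up]
    abel

end Koszul

section DoubleDegree

open MvPolynomial

/-- The polynomials `p` with `2 * deg p ≤ k`: the variables are given degree two because they stand
for the products `u d` and `d u` of two generators of degree one. -/
def doubleDegreeLE (σ R : Type*) [CommSemiring R] (k : ℤ) : Submodule R (MvPolynomial σ R) :=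
  restrictSupport R {s | 2 * (s.degree : ℤ) ≤ k}

variable {σ R : Type*}

section CommSemiring

variable [CommSemiring R] {j k : ℤ} {p q : MvPolynomial σ R}

lemma mem_doubleDegreeLE :
    p ∈ doubleDegreeLE σ R k ↔ ∀ s, coeff s p ≠ 0 → 2 * (s.degree : ℤ) ≤ k := by
  simp [doubleDegreeLE, mem_restrictSupport_iff, Set.subset_def]

lemma doubleDegreeLE_mono (hp : p ∈ doubleDegreeLE σ R j) (hjk : j ≤ k) :
    p ∈ doubleDegreeLE σ R k :=
  restrictSupport_mono R (fun _ hs ↦ le_trans hs hjk) hp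

lemma eq_zero_of_mem_doubleDegreeLE (hp : p ∈ doubleDegreeLE σ R k) (hk : k < 0) : p = 0 := by
  ext s
  by_contra hs
  have := mem_doubleDegreeLE.mp hp s hs
  omega

lemma exists_mem_doubleDegreeLE (p : MvPolynomial σ R) : ∃ k, p ∈ doubleDegreeLE σ R k :=
  ⟨2 * p.totalDegree, mem_doubleDegreeLE.mpr fun s hs ↦ by
    have : s.degree ≤ p.totalDegree := le_totalDegree (mem_support_iff.mpr hs)
    omega⟩

lemma C_mem_doubleDegreeLE (c : R) (hk : 0 ≤ k) : C c ∈ doubleDegreeLE σ R k := by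
  classical
  refine mem_doubleDegreeLE.mpr fun s hs ↦ ?_
  obtain rfl : 0 = s := by
    by_contra h
    exact hs (by rw [coeff_C, if_neg h])
  simpa using hk

lemma X_mem_doubleDegreeLE (i : σ) : X i ∈ doubleDegreeLE σ R 2 := by
  classical
  refine mem_doubleDegreeLE.mpr fun s hs ↦ ?_
  obtain rfl : Finsupp.single i 1 = s := by
    by_contra h
    exact hs (by rw [coeff_X, if_neg h])
  simp

lemma mul_mem_doubleDegreeLE (hp : p ∈ doubleDegreeLE σ R j) (hq : q ∈ doubleDegreeLE σ R k) :
    p * q ∈ doubleDegreeLE σ R (j + k) := by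
  classical
  refine mem_doubleDegreeLE.mpr fun s hs ↦ ?_
  rw [coeff_mul] at hs
  obtain ⟨st, hst, h⟩ := Finset.exists_ne_zero_of_sum_ne_zero hs
  rw [← Finset.HasAntidiagonal.mem_antidiagonal.mp hst, map_add]
  have := mem_doubleDegreeLE.mp hp _ (left_ne_zero_of_mul h)
  have := mem_doubleDegreeLE.mp hq _ (right_ne_zero_of_mul h)
  omega

lemma exists_eq_C_of_mem_doubleDegreeLE_zero (hp : p ∈ doubleDegreeLE σ R 0) : ∃ c, p = C c := by
  classical
  refine ⟨coeff 0 p, ext _ _ fun s ↦ ?_⟩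
  rw [coeff_C]
  split_ifs with hs
  · rw [hs]
  · by_contra h
    have := mem_doubleDegreeLE.mp hp s h
    exact hs ((Finsupp.degree_eq_zero_iff s).mp (by omega)).symm

lemma mem_doubleDegreeLE_of_X_mul_mem {i : σ} (hp : X i * p ∈ doubleDegreeLE σ R k) :
    p ∈ doubleDegreeLE σ R (k - 2) := by
  refine mem_doubleDegreeLE.mpr fun s hs ↦ ?_
  have := mem_doubleDegreeLE.mp hp (Finsupp.single i 1 + s) (by rwa [coeff_X_mul])
  rw [map_add, Finsupp.degree_single] at this
  omega

lemma divMonomial_mem_doubleDegreeLE (hp : p ∈ doubleDegreeLE σ R k) (i : σ) :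
    p.divMonomial (Finsupp.single i 1) ∈ doubleDegreeLE σ R (k - 2) := by
  refine mem_doubleDegreeLE.mpr fun s hs ↦ ?_
  rw [coeff_divMonomial] at hs
  have := mem_doubleDegreeLE.mp hp _ hs
  rw [map_add, Finsupp.degree_single] at this
  omega

lemma coeff_modMonomial_ne_zero_iff {s t : σ →₀ ℕ} :
    coeff s (p.modMonomial t) ≠ 0 ↔ ¬ t ≤ s ∧ coeff s p ≠ 0 := by
  by_cases hts : t ≤ s <;>
    simp [hts, coeff_modMonomial_of_le, coeff_modMonomial_of_not_le]

end CommSemiring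

variable [CommRing R] {k : ℤ}

/-- Degreewise, the maximal ideal `(x, y)` of `R[x, y]` is complemented by the constants. -/
lemma exists_sub_X_mul_add_X_mul_mem_doubleDegreeLE {r : MvPolynomial (Fin 2) R}
    (hr : r ∈ doubleDegreeLE (Fin 2) R k) :
    ∃ p ∈ doubleDegreeLE (Fin 2) R (k - 2), ∃ q ∈ doubleDegreeLE (Fin 2) R (k - 2),
      r - (X 0 * p + X 1 * q) ∈ doubleDegreeLE (Fin 2) R 0 := by
  set r₀ := r.modMonomial (Finsupp.single 0 1)
  have hr₀_mem : r₀ ∈ doubleDegreeLE (Fin 2) R k := mem_doubleDegreeLE.mpr fun s hs ↦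
    mem_doubleDegreeLE.mp hr s (coeff_modMonomial_ne_zero_iff.mp hs).2
  refine ⟨_, divMonomial_mem_doubleDegreeLE hr 0, _, divMonomial_mem_doubleDegreeLE hr₀_mem 1,
    mem_doubleDegreeLE.mpr fun s hs ↦ ?_⟩
  rw [← sub_sub, sub_eq_of_eq_add' (divMonomial_add_modMonomial_single r 0).symm,
    sub_eq_of_eq_add' (divMonomial_add_modMonomial_single r₀ 1).symm] at hs
  obtain ⟨hs₁, hs⟩ := coeff_modMonomial_ne_zero_iff.mp hs
  have hs₀ := (coeff_modMonomial_ne_zero_iff.mp hs).1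
  rw [Finsupp.single_le_iff] at hs₀ hs₁
  obtain rfl : s = 0 := by ext i; fin_cases i <;> simp <;> omega
  simp

/-- Exactness of the Koszul complex of `x, y` on the associated graded ring of `R[x, y]`. -/
lemma exists_X_mul_of_X_mul_add_X_mul_mem_doubleDegreeLE {p q : MvPolynomial (Fin 2) R}
    (hq : q ∈ doubleDegreeLE (Fin 2) R k)
    (h : X 0 * p + X 1 * q ∈ doubleDegreeLE (Fin 2) R (k + 1)) :
    ∃ r ∈ doubleDegreeLE (Fin 2) R (k - 2), p + X 1 * r ∈ doubleDegreeLE (Fin 2) R (k - 1) ∧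
      q - X 0 * r ∈ doubleDegreeLE (Fin 2) R (k - 1) := by
  set r := q.divMonomial (Finsupp.single 0 1)
  have hqr : q - X 0 * r ∈ doubleDegreeLE (Fin 2) R (k - 1) := by
    rw [sub_eq_of_eq_add' (divMonomial_add_modMonomial_single q 0).symm]
    refine mem_doubleDegreeLE.mpr fun s hs ↦ ?_
    obtain ⟨hs₀, hs⟩ := coeff_modMonomial_ne_zero_iff.mp hs
    have := mem_doubleDegreeLE.mp h (Finsupp.single 1 1 + s) (by
      rw [Finsupp.single_le_iff] at hs₀
      rw [coeff_add, coeff_X_mul, coeff_X_mul', if_neg, zero_add]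
      · exact hs
      · simp; omega)
    rw [map_add, Finsupp.degree_single] at this
    omega
  refine ⟨r, divMonomial_mem_doubleDegreeLE hq 0, ?_, hqr⟩
  have : X 0 * (p + X 1 * r) ∈ doubleDegreeLE (Fin 2) R (k + 1) := by
    rw [show X 0 * (p + X 1 * r) = (X 0 * p + X 1 * q) - X 1 * (q - X 0 * r) by ring]
    exact sub_mem h (doubleDegreeLE_mono
      (mul_mem_doubleDegreeLE (X_mem_doubleDegreeLE 1) hqr) (by omega))
  exact doubleDegreeLE_mono (mem_doubleDegreeLE_of_X_mul_mem this) (by omega)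

end DoubleDegree

section WeightOrbit

open MvPolynomial

variable {R : Type*} [CommRing R] (a : R) (b : Rˣ) (g : R)

/-- The orbit of `x = X 0` under `weightAut`. In a down-up algebra, `u d` acts on the weight space
of weight `n` of the PBW representation as `weightOrbit a b g n`, and `d u` acts on it as
`weightOrbit a b g (n + 1)`. -/
def weightOrbit (n : ℤ) : MvPolynomial (Fin 2) R := (weightAut a b g ^ n) (X 0)

lemma zpow_weightAut_weightOrbit (m n : ℤ) :
    (weightAut a b g ^ m) (weightOrbit a b g n) = weightOrbit a b g (m + n) := by
  rw [weightOrbit, weightOrbit, zpow_add, AlgEquiv.mul_apply]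

lemma weightAut_weightOrbit (n : ℤ) :
    weightAut a b g (weightOrbit a b g n) = weightOrbit a b g (n + 1) := by
  rw [add_comm, ← zpow_weightAut_weightOrbit, zpow_one]

@[simp]
lemma weightOrbit_zero : weightOrbit a b g 0 = X 0 := rfl

@[simp]
lemma weightOrbit_one : weightOrbit a b g 1 = X 1 := by
  rw [← weightAut_X_zero a b g, weightOrbit, zpow_one]

lemma weightOrbit_add_two (n : ℤ) : weightOrbit a b g (n + 2) =
    a • weightOrbit a b g (n + 1) + (b : R) • weightOrbit a b g n + C g := by
  have two : weightOrbit a b g 2 =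
      a • weightOrbit a b g 1 + (b : R) • weightOrbit a b g 0 + C g := by
    rw [show (2 : ℤ) = 1 + 1 from rfl, ← weightAut_weightOrbit]
    simp
  have := congrArg (weightAut a b g ^ n) two
  rwa [map_add, map_add, map_smul, map_smul, zpow_weightAut_weightOrbit,
    zpow_weightAut_weightOrbit, zpow_weightAut_weightOrbit, add_zero, ← algebraMap_eq,
    AlgEquiv.commutes] at this

lemma weightOrbit_mem_doubleDegreeLE (n : ℤ) :
    weightOrbit a b g n ∈ doubleDegreeLE (Fin 2) R 2 := by
  suffices weightOrbit a b g n ∈ doubleDegreeLE (Fin 2) R 2 ∧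
      weightOrbit a b g (n + 1) ∈ doubleDegreeLE (Fin 2) R 2 from this.1
  have hg : C g ∈ doubleDegreeLE (Fin 2) R 2 := C_mem_doubleDegreeLE g zero_le_two
  induction n using Int.induction_on with
  | zero => simp [X_mem_doubleDegreeLE]
  | succ i ih =>
    rw [add_assoc _ 1, one_add_one_eq_two, weightOrbit_add_two]
    exact ⟨ih.2, add_mem (add_mem (Submodule.smul_mem _ _ ih.2) (Submodule.smul_mem _ _ ih.1)) hg⟩
  | pred i ih =>
    rw [sub_add_cancel]
    refine ⟨(Submodule.smul_mem_iff' _ b).mp ?_, ih.1⟩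
    have := weightOrbit_add_two a b g (-i - 1)
    rw [show -(i : ℤ) - 1 + 2 = -i + 1 by ring, sub_add_cancel] at this
    rw [Units.smul_def, ← sub_eq_of_eq_add' (sub_eq_of_eq_add this)]
    exact sub_mem (sub_mem ih.2 hg) (Submodule.smul_mem _ _ ih.1)

/-- The coefficient of `u` from weight `n` to weight `n + 1` in the PBW representation. -/
def upCoeff (n : ℤ) : MvPolynomial (Fin 2) R := if 0 ≤ n then 1 else weightOrbit a b g (n + 1)

/-- The coefficient of `d` from weight `n` to weight `n - 1` in the PBW representation. -/
def downCoeff (n : ℤ) : MvPolynomial (Fin 2) R := if n ≤ 0 then 1 else weightOrbit a b g n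

variable {n : ℤ}

lemma upCoeff_of_nonneg (hn : 0 ≤ n) : upCoeff a b g n = 1 := if_pos hn

lemma upCoeff_of_neg (hn : n < 0) : upCoeff a b g n = weightOrbit a b g (n + 1) :=
  if_neg hn.not_ge

lemma downCoeff_of_nonpos (hn : n ≤ 0) : downCoeff a b g n = 1 := if_pos hn

lemma downCoeff_of_pos (hn : 0 < n) : downCoeff a b g n = weightOrbit a b g n := if_neg hn.not_ge

lemma downCoeff_mul_upCoeff (n : ℤ) :
    downCoeff a b g (n + 1) * upCoeff a b g n = weightOrbit a b g (n + 1) := by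
  rcases le_or_gt 0 n with hn | hn
  · rw [upCoeff_of_nonneg _ _ _ hn, downCoeff_of_pos _ _ _ (by omega), mul_one]
  · rw [upCoeff_of_neg _ _ _ hn, downCoeff_of_nonpos _ _ _ (by omega), one_mul]

end WeightOrbit

section WeightExactness

open MvPolynomial

/-- The polynomials that occur as coefficients of weight `n` in elements of filtration degree at
most `k` of a down-up algebra, where `u` and `d` have degree one. -/
abbrev weightDegreeLE (R : Type*) [CommRing R] (n k : ℤ) : Submodule R (MvPolynomial (Fin 2) R) :=
  doubleDegreeLE (Fin 2) R (k - n.natAbs)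

variable {R : Type*} [CommRing R] {a : R} {b : Rˣ} {g : R} {n k : ℤ}

lemma upCoeff_mul_mem_weightDegreeLE {r : MvPolynomial (Fin 2) R} (hr : r ∈ weightDegreeLE R n k) :
    upCoeff a b g n * r ∈ weightDegreeLE R (n + 1) (k + 1) := by
  rcases le_or_gt 0 n with hn | hn
  · rw [upCoeff_of_nonneg _ _ _ hn, one_mul]
    exact doubleDegreeLE_mono hr (by omega)
  · rw [upCoeff_of_neg _ _ _ hn]
    exact doubleDegreeLE_mono (mul_mem_doubleDegreeLE (weightOrbit_mem_doubleDegreeLE a b g _) hr)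
      (by omega)

lemma downCoeff_mul_mem_weightDegreeLE {r : MvPolynomial (Fin 2) R}
    (hr : r ∈ weightDegreeLE R n k) :
    downCoeff a b g n * r ∈ weightDegreeLE R (n - 1) (k + 1) := by
  rcases le_or_gt n 0 with hn | hn
  · rw [downCoeff_of_nonpos _ _ _ hn, one_mul]
    exact doubleDegreeLE_mono hr (by omega)
  · rw [downCoeff_of_pos _ _ _ hn]
    exact doubleDegreeLE_mono (mul_mem_doubleDegreeLE (weightOrbit_mem_doubleDegreeLE a b g _) hr)
      (by omega)

variable (a b g)

lemma exists_sub_upCoeff_mul_add_downCoeff_mul_mem (hk : 1 ≤ k) {r : MvPolynomial (Fin 2) R}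
    (hr : r ∈ weightDegreeLE R n k) :
    ∃ x ∈ weightDegreeLE R (n - 1) (k - 1), ∃ y ∈ weightDegreeLE R (n + 1) (k - 1),
      r - (upCoeff a b g (n - 1) * x + downCoeff a b g (n + 1) * y) ∈
        weightDegreeLE R n (k - 1) := by
  rcases lt_trichotomy n 0 with hn | rfl | hn
  · refine ⟨0, zero_mem _, r, doubleDegreeLE_mono hr (by omega), ?_⟩
    simp [downCoeff_of_nonpos a b g (show n + 1 ≤ 0 by omega)]
  · obtain ⟨p, hp, q, hq, h⟩ := exists_sub_X_mul_add_X_mul_mem_doubleDegreeLE hr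
    refine ⟨p, doubleDegreeLE_mono hp (by omega), q, doubleDegreeLE_mono hq (by omega), ?_⟩
    rw [upCoeff_of_neg _ _ _ (by omega), downCoeff_of_pos _ _ _ (by omega), sub_add_cancel,
      zero_add, weightOrbit_zero, weightOrbit_one]
    exact doubleDegreeLE_mono h (by omega)
  · refine ⟨r, doubleDegreeLE_mono hr (by omega), 0, zero_mem _, ?_⟩
    simp [upCoeff_of_nonneg a b g (show 0 ≤ n - 1 by omega)]

lemma exists_weightSyzygy₁ {x y : MvPolynomial (Fin 2) R}
    (hx : x ∈ weightDegreeLE R (n - 1) k) (hy : y ∈ weightDegreeLE R (n + 1) k)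
    (h : upCoeff a b g (n - 1) * x + downCoeff a b g (n + 1) * y ∈ weightDegreeLE R n k) :
    ∃ c ∈ weightDegreeLE R (n - 1) (k - 2), ∃ e ∈ weightDegreeLE R (n + 1) (k - 2),
      x + (weightOrbit a b g (n + 1) * c +
        b • (downCoeff a b g n * downCoeff a b g (n + 1) * e)) ∈
          weightDegreeLE R (n - 1) (k - 1) ∧
      y - (upCoeff a b g n * upCoeff a b g (n - 1) * c + b • (weightOrbit a b g n * e)) ∈
        weightDegreeLE R (n + 1) (k - 1) := by
  rcases lt_trichotomy n 0 with hn | rfl | hn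
  · rw [upCoeff_of_neg _ _ _ (by omega), downCoeff_of_nonpos _ _ _ (by omega), one_mul,
      sub_add_cancel] at h
    refine ⟨0, zero_mem _, -(b⁻¹ • x), neg_mem (Submodule.smul_mem _ _
      (doubleDegreeLE_mono hx (by omega))), ?_,
      doubleDegreeLE_mono (?_ : _ ∈ doubleDegreeLE _ _ (k + n)) (by omega)⟩
    · simp [downCoeff_of_nonpos a b g hn.le, downCoeff_of_nonpos a b g (show n + 1 ≤ 0 by omega)]
    · simpa [mul_smul_comm, add_comm] using doubleDegreeLE_mono (k := k + n) h (by omega)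
  · rw [upCoeff_of_neg _ _ _ (by omega), downCoeff_of_pos _ _ _ (by omega), sub_add_cancel,
      zero_add, weightOrbit_zero, weightOrbit_one] at h
    obtain ⟨r, hr, h₁, h₂⟩ := exists_X_mul_of_X_mul_add_X_mul_mem_doubleDegreeLE hy
      (doubleDegreeLE_mono h (by omega))
    refine ⟨r, doubleDegreeLE_mono hr (by omega), 0, zero_mem _,
      doubleDegreeLE_mono (?_ : _ ∈ doubleDegreeLE _ _ (k - 2)) (by omega),
      doubleDegreeLE_mono (?_ : _ ∈ doubleDegreeLE _ _ (k - 2)) (by omega)⟩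
    · simpa using doubleDegreeLE_mono h₁ (by omega)
    · rw [upCoeff_of_nonneg _ _ _ le_rfl, upCoeff_of_neg _ _ _ (by omega)]
      simpa using doubleDegreeLE_mono h₂ (by omega)
  · rw [upCoeff_of_nonneg _ _ _ (by omega), downCoeff_of_pos _ _ _ (by omega), one_mul] at h
    refine ⟨y, doubleDegreeLE_mono hy (by omega), 0, zero_mem _, ?_, ?_⟩
    · simpa using doubleDegreeLE_mono h (by omega)
    · simp [upCoeff_of_nonneg a b g hn.le, upCoeff_of_nonneg a b g (show 0 ≤ n - 1 by omega)]

lemma exists_weightSyzygy₂ {c e : MvPolynomial (Fin 2) R}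
    (hc : c ∈ weightDegreeLE R (n - 1) k) (he : e ∈ weightDegreeLE R (n + 1) k)
    (h₁ : weightOrbit a b g (n + 1) * c +
      b • (downCoeff a b g n * downCoeff a b g (n + 1) * e) ∈ weightDegreeLE R (n - 1) (k + 1))
    (h₂ : upCoeff a b g n * upCoeff a b g (n - 1) * c + b • (weightOrbit a b g n * e) ∈
      weightDegreeLE R (n + 1) (k + 1)) :
    ∃ f ∈ weightDegreeLE R n (k - 1),
      c + b • (downCoeff a b g n * f) ∈ weightDegreeLE R (n - 1) (k - 1) ∧
      e - upCoeff a b g n * f ∈ weightDegreeLE R (n + 1) (k - 1) := by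
  rcases lt_trichotomy n 0 with hn | rfl | hn
  · rw [downCoeff_of_nonpos _ _ _ hn.le, downCoeff_of_nonpos _ _ _ (by omega), one_mul,
      one_mul] at h₁
    refine ⟨-(b⁻¹ • c), neg_mem (Submodule.smul_mem _ _ (doubleDegreeLE_mono hc (by omega))), ?_,
      doubleDegreeLE_mono (?_ : _ ∈ doubleDegreeLE _ _ (k + n))
        (by omega)⟩
    · simp [downCoeff_of_nonpos a b g hn.le]
    · have := (Submodule.smul_mem_iff' _ b⁻¹).mpr (doubleDegreeLE_mono (k := k + n) h₁ (by omega))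
      simpa [upCoeff_of_neg a b g hn, add_comm, mul_smul_comm] using this
  · refine ⟨e, doubleDegreeLE_mono he (by omega), ?_, ?_⟩
    · rw [upCoeff_of_nonneg _ _ _ le_rfl, upCoeff_of_neg _ _ _ (by omega), one_mul,
        sub_add_cancel, weightOrbit_zero, ← mul_smul_comm, ← mul_add] at h₂
      rw [downCoeff_of_nonpos _ _ _ le_rfl, one_mul]
      exact doubleDegreeLE_mono (mem_doubleDegreeLE_of_X_mul_mem h₂) (by omega)
    · simp [upCoeff_of_nonneg a b g le_rfl]
  · rw [upCoeff_of_nonneg _ _ _ hn.le, upCoeff_of_nonneg _ _ _ (by omega), one_mul, one_mul] at h₂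
    refine ⟨e, doubleDegreeLE_mono he (by omega), ?_, ?_⟩
    · rw [downCoeff_of_pos _ _ _ hn]
      exact doubleDegreeLE_mono h₂ (by omega)
    · simp [upCoeff_of_nonneg a b g hn.le]

lemma mem_weightDegreeLE_of_smul_downCoeff_mul_mem {f : MvPolynomial (Fin 2) R}
    (h₁ : b • (downCoeff a b g n * f) ∈ weightDegreeLE R (n - 1) k)
    (h₂ : upCoeff a b g n * f ∈ weightDegreeLE R (n + 1) k) : f ∈ weightDegreeLE R n (k - 1) := by
  rcases le_or_gt 0 n with hn | hn
  · rw [upCoeff_of_nonneg _ _ _ hn, one_mul] at h₂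
    exact doubleDegreeLE_mono h₂ (by omega)
  · rw [downCoeff_of_nonpos _ _ _ hn.le, one_mul, Submodule.smul_mem_iff'] at h₁
    exact doubleDegreeLE_mono h₁ (by omega)

end WeightExactness

section PBW

open MvPolynomial

variable {R S : Type*} [CommRing R] [Ring S] [Algebra R S] {a : R} {b : Rˣ} {g : R} {u d : S}

section Operators

variable (a b g)

/-- The operator by which `u` acts in the PBW representation, the space of polynomials in
`x = u d` and `y = d u` at each weight. -/
def upOp : Module.End R (ℤ →₀ MvPolynomial (Fin 2) R) :=
  Finsupp.lsum R fun n ↦ Finsupp.lsingle (n + 1) ∘ₗ LinearMap.mulLeft R (upCoeff a b g n)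

/-- The operator by which `d` acts in the PBW representation. -/
def downOp : Module.End R (ℤ →₀ MvPolynomial (Fin 2) R) :=
  Finsupp.lsum R fun n ↦ Finsupp.lsingle (n - 1) ∘ₗ LinearMap.mulLeft R (downCoeff a b g n)

variable (n : ℤ) (r : MvPolynomial (Fin 2) R) (v : ℤ →₀ MvPolynomial (Fin 2) R)

lemma upOp_single :
    upOp a b g (Finsupp.single n r) = Finsupp.single (n + 1) (upCoeff a b g n * r) := by
  simp [upOp]

lemma downOp_single :
    downOp a b g (Finsupp.single n r) = Finsupp.single (n - 1) (downCoeff a b g n * r) := by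
  simp [downOp]

lemma upOp_apply : upOp a b g v n = upCoeff a b g (n - 1) * v (n - 1) := by
  induction v using Finsupp.induction_linear with
  | zero => simp
  | add v w hv hw => simp [hv, hw, mul_add]
  | single m r =>
    rw [upOp_single]
    obtain rfl | hm := eq_or_ne n (m + 1)
    · simp
    · rw [Finsupp.single_eq_of_ne hm, Finsupp.single_eq_of_ne (by omega), mul_zero]

lemma downOp_apply : downOp a b g v n = downCoeff a b g (n + 1) * v (n + 1) := by
  induction v using Finsupp.induction_linear with
  | zero => simp
  | add v w hv hw => simp [hv, hw, mul_add]
  | single m r =>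
    rw [downOp_single]
    obtain rfl | hm := eq_or_ne n (m - 1)
    · simp
    · rw [Finsupp.single_eq_of_ne hm, Finsupp.single_eq_of_ne (by omega), mul_zero]

lemma downOp_upOp_apply : downOp a b g (upOp a b g v) n = weightOrbit a b g (n + 1) * v n := by
  rw [downOp_apply, upOp_apply, add_sub_cancel_right, ← mul_assoc, downCoeff_mul_upCoeff]

lemma upOp_downOp_apply : upOp a b g (downOp a b g v) n = weightOrbit a b g n * v n := by
  have := downCoeff_mul_upCoeff a b g (n - 1)
  rw [sub_add_cancel] at this
  rw [upOp_apply, downOp_apply, sub_add_cancel, ← mul_assoc, mul_comm (upCoeff a b g (n - 1)),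
    this]

lemma isDownUpPair_upOp_downOp : IsDownUpPair a b g (upOp a b g) (downOp a b g) where
  mul_up_up := by
    refine LinearMap.ext fun v ↦ Finsupp.ext fun n ↦ ?_
    have hrec := weightOrbit_add_two a b g (n - 1)
    rw [show n - 1 + 2 = n + 1 by ring, sub_add_cancel] at hrec
    simp only [Module.End.mul_apply, LinearMap.add_apply, LinearMap.smul_apply, Finsupp.add_apply,
      Finsupp.smul_apply]
    rw [downOp_upOp_apply, upOp_downOp_apply, upOp_apply, upOp_apply _ _ _ _ (upOp a b g _),
      upOp_downOp_apply, hrec]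
    simp only [smul_eq_C_mul]
    ring
  down_down_mul := by
    refine LinearMap.ext fun v ↦ Finsupp.ext fun n ↦ ?_
    simp only [Module.End.mul_apply, LinearMap.add_apply, LinearMap.smul_apply, Finsupp.add_apply,
      Finsupp.smul_apply]
    rw [downOp_apply, downOp_upOp_apply, downOp_upOp_apply, upOp_downOp_apply, downOp_apply,
      show n + 1 + 1 = n + 2 by ring, weightOrbit_add_two]
    simp only [smul_eq_C_mul]
    ring

end Operators

/-- The element `u ^ n` for `0 ≤ n` and `d ^ (-n)` for `n ≤ 0`. -/
def weightMonomial (u d : S) (n : ℤ) : S := u ^ n.toNat * d ^ (-n).toNat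

lemma weightMonomial_natCast (n : ℕ) : weightMonomial u d n = u ^ n := by simp [weightMonomial]

lemma weightMonomial_neg_natCast (n : ℕ) : weightMonomial u d (-n) = d ^ n := by
  simp [weightMonomial]

variable (h : IsDownUpPair a (b : R) g u d)

namespace IsDownUpPair

lemma weightHom_weightOrbit_mul_up_pow (m : ℤ) (n : ℕ) :
    h.weightHom (weightOrbit a b g m) * u ^ n =
      u ^ n * h.weightHom (weightOrbit a b g (m + n)) := by
  induction n with
  | zero => simp
  | succ n ih =>
    rw [pow_succ, ← mul_assoc, ih, mul_assoc, h.weightHom_mul_up, weightAut_weightOrbit,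
      ← mul_assoc, add_assoc, Nat.cast_succ]

lemma down_pow_mul_weightHom_weightOrbit (m : ℤ) (n : ℕ) :
    d ^ n * h.weightHom (weightOrbit a b g m) =
      h.weightHom (weightOrbit a b g (m + n)) * d ^ n := by
  induction n with
  | zero => simp
  | succ n ih =>
    rw [pow_succ', mul_assoc, ih, ← mul_assoc, h.down_mul_weightHom, weightAut_weightOrbit,
      mul_assoc, add_assoc, Nat.cast_succ]

lemma up_mul_weightMonomial (n : ℤ) :
    u * weightMonomial u d n = weightMonomial u d (n + 1) * h.weightHom (upCoeff a b g n) := by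
  rcases le_or_gt 0 n with hn | hn
  · lift n to ℕ using hn
    rw [upCoeff_of_nonneg _ _ _ (by omega), map_one, mul_one, ← Nat.cast_succ,
      weightMonomial_natCast, weightMonomial_natCast, pow_succ']
  · obtain ⟨m, rfl⟩ : ∃ m : ℕ, n = -(m + 1 : ℕ) := ⟨(-n - 1).toNat, by omega⟩
    have := h.down_pow_mul_weightHom_weightOrbit (-m) m
    rw [neg_add_cancel, weightOrbit_zero, weightHom_X_zero] at this
    rw [upCoeff_of_neg _ _ _ hn, weightMonomial_neg_natCast,
      show -((m + 1 : ℕ) : ℤ) + 1 = -m by push_cast; ring, weightMonomial_neg_natCast, this,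
      pow_succ', mul_assoc]

lemma down_mul_weightMonomial (n : ℤ) :
    d * weightMonomial u d n = weightMonomial u d (n - 1) * h.weightHom (downCoeff a b g n) := by
  rcases le_or_gt n 0 with hn | hn
  · obtain ⟨m, rfl⟩ := Int.exists_eq_neg_ofNat hn
    rw [downCoeff_of_nonpos _ _ _ hn, map_one, mul_one,
      show -(m : ℤ) - 1 = -(m + 1 : ℕ) by push_cast; ring, weightMonomial_neg_natCast,
      weightMonomial_neg_natCast, pow_succ']
  · obtain ⟨m, rfl⟩ : ∃ m : ℕ, n = (m + 1 : ℕ) := ⟨(n - 1).toNat, by omega⟩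
    have := h.weightHom_weightOrbit_mul_up_pow 1 m
    rw [weightOrbit_one, weightHom_X_one, add_comm 1, ← Nat.cast_succ] at this
    rw [downCoeff_of_pos _ _ _ hn, weightMonomial_natCast, Nat.cast_succ, add_sub_cancel_right,
      weightMonomial_natCast, ← Nat.cast_succ, ← this, pow_succ', mul_assoc]

/-- The map from the PBW representation that sends the polynomial `r` at weight `n` to
`weightMonomial u d n * r (u * d, d * u)`. -/
def ofWeights : (ℤ →₀ MvPolynomial (Fin 2) R) →ₗ[R] S :=
  Finsupp.lsum R fun n ↦
    LinearMap.mulLeft R (weightMonomial u d n) ∘ₗ h.weightHom.toLinearMap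

lemma ofWeights_single (n : ℤ) (r : MvPolynomial (Fin 2) R) :
    h.ofWeights (Finsupp.single n r) = weightMonomial u d n * h.weightHom r := by
  simp [ofWeights]

lemma ofWeights_upOp (v : ℤ →₀ MvPolynomial (Fin 2) R) :
    h.ofWeights (upOp a b g v) = u * h.ofWeights v := by
  induction v using Finsupp.induction_linear with
  | zero => simp
  | add v w hv hw => simp only [map_add, mul_add, hv, hw]
  | single n r =>
    rw [upOp_single, ofWeights_single, ofWeights_single, map_mul, ← mul_assoc, ← mul_assoc,
      h.up_mul_weightMonomial]

lemma ofWeights_downOp (v : ℤ →₀ MvPolynomial (Fin 2) R) :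
    h.ofWeights (downOp a b g v) = d * h.ofWeights v := by
  induction v using Finsupp.induction_linear with
  | zero => simp
  | add v w hv hw => simp only [map_add, mul_add, hv, hw]
  | single n r =>
    rw [downOp_single, ofWeights_single, ofWeights_single, map_mul, ← mul_assoc, ← mul_assoc,
      h.down_mul_weightMonomial]

section Representation

variable {T : S →ₐ[R] Module.End R (ℤ →₀ MvPolynomial (Fin 2) R)}
  (hTu : T u = upOp a b g) (hTd : T d = downOp a b g)

include hTu hTd

lemma ofWeights_representation (hgen : Algebra.adjoin R {u, d} = ⊤) (x : S)
    (v : ℤ →₀ MvPolynomial (Fin 2) R) : h.ofWeights (T x v) = x * h.ofWeights v := by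
  have hx : x ∈ Algebra.adjoin R {u, d} := hgen ▸ Algebra.mem_top
  induction hx using Algebra.adjoin_induction generalizing v with
  | mem x hx =>
    obtain rfl | rfl := hx
    · rw [hTu, ofWeights_upOp]
    · rw [hTd, ofWeights_downOp]
  | algebraMap c => rw [AlgHom.commutes, Module.algebraMap_end_apply, map_smul, Algebra.smul_def]
  | add x y _ _ hx hy => rw [map_add, LinearMap.add_apply, map_add, hx, hy, add_mul]
  | mul x y _ _ hx hy => rw [map_mul, Module.End.mul_apply, hx, hy, mul_assoc]

lemma representation_weightHom_single_zero (r : MvPolynomial (Fin 2) R) :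
    ∀ s, T (h.weightHom r) (Finsupp.single 0 s) = Finsupp.single 0 (r * s) := by
  induction r using MvPolynomial.induction_on with
  | C c => simp [Module.algebraMap_end_apply, Finsupp.smul_single, smul_eq_C_mul]
  | add p q hp hq => simp [hp, hq, add_mul]
  | mul_X p i hp =>
    suffices ∀ s, T (h.weightHom (X i)) (Finsupp.single 0 s) = Finsupp.single 0 (X i * s) by
      intro s
      rw [map_mul, map_mul, Module.End.mul_apply, this, hp, mul_assoc]
    intro s
    fin_cases i
    · simp [hTu, hTd, downOp_single, upOp_single, downCoeff_of_nonpos, upCoeff_of_neg]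
    · simp [hTu, hTd, downOp_single, upOp_single, downCoeff_of_pos, upCoeff_of_nonneg]

lemma representation_weightMonomial_single_zero (n : ℤ) (r : MvPolynomial (Fin 2) R) :
    T (weightMonomial u d n) (Finsupp.single 0 r) = Finsupp.single n r := by
  obtain ⟨m, rfl | rfl⟩ := n.eq_nat_or_neg
  · rw [weightMonomial_natCast, map_pow, hTu]
    induction m with
    | zero => simp
    | succ m ih =>
      rw [pow_succ', Module.End.mul_apply, ih, upOp_single, upCoeff_of_nonneg _ _ _ (by omega),
        one_mul, Nat.cast_succ]
  · rw [weightMonomial_neg_natCast, map_pow, hTd]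
    induction m with
    | zero => simp
    | succ m ih =>
      rw [pow_succ', Module.End.mul_apply, ih, downOp_single,
        downCoeff_of_nonpos _ _ _ (by omega), one_mul, Nat.cast_succ, neg_add']

lemma representation_ofWeights (v : ℤ →₀ MvPolynomial (Fin 2) R) :
    T (h.ofWeights v) (Finsupp.single 0 1) = v := by
  induction v using Finsupp.induction_linear with
  | zero => simp
  | add v w hv hw => rw [map_add, map_add, LinearMap.add_apply, hv, hw]
  | single n r =>
    rw [ofWeights_single, map_mul, Module.End.mul_apply,
      h.representation_weightHom_single_zero hTu hTd, mul_one,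
      representation_weightMonomial_single_zero hTu hTd]

end Representation

end IsDownUpPair

/-- A PBW basis for `u` and `d`: linear coordinates on `S` in which `u` and `d` act on the left as
in the PBW representation. -/
structure IsPBWCoordinates (a : R) (b : Rˣ) (g : R) (u d : S)
    (Φ : S ≃ₗ[R] (ℤ →₀ MvPolynomial (Fin 2) R)) : Prop where
  map_one : Φ 1 = Finsupp.single 0 1
  map_up_mul (x : S) : Φ (u * x) = upOp a b g (Φ x)
  map_down_mul (x : S) : Φ (d * x) = downOp a b g (Φ x)

include h in
lemma IsDownUpPair.exists_isPBWCoordinates (hgen : Algebra.adjoin R {u, d} = ⊤)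
    {T : S →ₐ[R] Module.End R (ℤ →₀ MvPolynomial (Fin 2) R)} (hTu : T u = upOp a b g)
    (hTd : T d = downOp a b g) : ∃ Φ, IsPBWCoordinates a b g u d Φ := by
  let Φ : S →ₗ[R] (ℤ →₀ MvPolynomial (Fin 2) R) :=
    LinearMap.applyₗ (Finsupp.single 0 1) ∘ₗ T.toLinearMap
  have hΦ (x : S) : Φ x = T x (Finsupp.single 0 1) := rfl
  have left_inv : h.ofWeights ∘ₗ Φ = LinearMap.id := by
    ext x
    simp [hΦ, h.ofWeights_representation hTu hTd hgen, ofWeights_single, weightMonomial]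
  have right_inv : Φ ∘ₗ h.ofWeights = LinearMap.id :=
    LinearMap.ext (h.representation_ofWeights hTu hTd)
  exact ⟨.ofLinearMap Φ h.ofWeights right_inv left_inv,
    by simp [hΦ], fun x ↦ by simp [hΦ, hTu], fun x ↦ by simp [hΦ, hTd]⟩

end PBW

section PBWFiltration

open MvPolynomial

variable {R S : Type*} [CommRing R] [Ring S] [Algebra R S] {a : R} {b : Rˣ} {g : R} {u d : S}

/-- The filtration of `S` that the PBW coordinates `Φ` carry over from the one in which `u` and `d`
have degree one. -/
def pbwFiltration (Φ : S ≃ₗ[R] (ℤ →₀ MvPolynomial (Fin 2) R)) (k : ℤ) : Submodule R S where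
  carrier := {x | ∀ n, Φ x n ∈ weightDegreeLE R n k}
  zero_mem' n := by simp
  add_mem' hx hy n := by simpa using add_mem (hx n) (hy n)
  smul_mem' c x hx n := by simpa using Submodule.smul_mem _ c (hx n)

variable {Φ : S ≃ₗ[R] (ℤ →₀ MvPolynomial (Fin 2) R)} {k : ℤ} {x : S}

lemma mem_pbwFiltration (σ : ℤ ≃ ℤ) :
    x ∈ pbwFiltration Φ k ↔ ∀ n, Φ x (σ n) ∈ weightDegreeLE R (σ n) k :=
  σ.forall_congr_right.symm

lemma exists_mem_pbwFiltration_apply_eq (σ : ℤ ≃ ℤ) {f : ℤ → MvPolynomial (Fin 2) R}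
    (hf : ∀ n, f n ∈ weightDegreeLE R (σ n) k) :
    ∃ x ∈ pbwFiltration Φ k, ∀ n, Φ x (σ n) = f n := by
  have hfin : (Function.support (f ∘ σ.symm)).Finite := by
    refine (Set.finite_Icc (-k) k).subset fun n hn ↦ ?_
    by_contra hnk
    refine hn (eq_zero_of_mem_doubleDegreeLE (hf (σ.symm n)) ?_)
    rw [Set.mem_Icc] at hnk
    rw [Equiv.apply_symm_apply]
    omega
  have hΦ (n : ℤ) : Φ (Φ.symm (.ofSupportFinite _ hfin)) (σ n) = f n := by
    simp [Finsupp.ofSupportFinite_coe]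
  exact ⟨_, (mem_pbwFiltration σ).mpr fun n ↦ hΦ n ▸ hf n, hΦ⟩

lemma pbwFiltration_mono : Monotone (pbwFiltration Φ) := fun j k hjk x hx n ↦
  doubleDegreeLE_mono (hx n) (by omega)

lemma pbwFiltration_eq_bot_of_neg (hk : k < 0) : pbwFiltration Φ k = ⊥ := by
  refine (Submodule.eq_bot_iff _).mpr fun x hx ↦ Φ.map_eq_zero_iff.mp (Finsupp.ext fun n ↦ ?_)
  exact eq_zero_of_mem_doubleDegreeLE (hx n) (by omega)

lemma exists_mem_pbwFiltration (Φ : S ≃ₗ[R] (ℤ →₀ MvPolynomial (Fin 2) R)) (x : S) :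
    ∃ k, x ∈ pbwFiltration Φ k := by
  choose deg hdeg using fun n ↦ exists_mem_doubleDegreeLE (Φ x n)
  obtain ⟨k, hk⟩ := ((Φ x).support.image fun n ↦ deg n + n.natAbs).exists_le
  refine ⟨k, fun n ↦ ?_⟩
  by_cases hn : Φ x n = 0
  · exact hn ▸ zero_mem _
  · have := hk _ (Finset.mem_image_of_mem _ (Finsupp.mem_support_iff.mpr hn))
    exact doubleDegreeLE_mono (hdeg n) (by omega)

namespace IsPBWCoordinates

variable (h : IsPBWCoordinates a b g u d Φ)

include h

lemma up_mul_mem (hx : x ∈ pbwFiltration Φ k) : u * x ∈ pbwFiltration Φ (k + 1) := by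
  refine (mem_pbwFiltration (Equiv.addRight 1)).mpr fun n ↦ ?_
  rw [h.map_up_mul, Equiv.coe_addRight, upOp_apply, add_sub_cancel_right]
  exact upCoeff_mul_mem_weightDegreeLE (hx n)

lemma down_mul_mem (hx : x ∈ pbwFiltration Φ k) : d * x ∈ pbwFiltration Φ (k + 1) := by
  refine (mem_pbwFiltration (Equiv.subRight 1)).mpr fun n ↦ ?_
  rw [h.map_down_mul, Equiv.subRight_apply, downOp_apply, sub_add_cancel]
  exact downCoeff_mul_mem_weightDegreeLE (hx n)

lemma mem_pbwFiltration_zero_iff : x ∈ pbwFiltration Φ 0 ↔ x ∈ Set.range (algebraMap R S) := by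
  have hΦ (c : R) : Φ (algebraMap R S c) = Finsupp.single 0 (C c) := by
    rw [Algebra.algebraMap_eq_smul_one, map_smul, h.map_one, Finsupp.smul_single, smul_eq_C_mul,
      mul_one]
  constructor
  · intro hx
    obtain ⟨c, hc⟩ := exists_eq_C_of_mem_doubleDegreeLE_zero (hx 0)
    refine ⟨c, Φ.injective (Finsupp.ext fun n ↦ ?_)⟩
    obtain rfl | hn := eq_or_ne n 0
    · rw [hΦ, hc, Finsupp.single_eq_same]
    · rw [hΦ, Finsupp.single_eq_of_ne hn, eq_zero_of_mem_doubleDegreeLE (hx n) (by omega)]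
  · rintro ⟨c, rfl⟩ n
    rw [hΦ]
    obtain rfl | hn := eq_or_ne n 0
    · rw [Finsupp.single_eq_same]
      exact C_mem_doubleDegreeLE c (by simp)
    · rw [Finsupp.single_eq_of_ne hn]
      exact zero_mem _

lemma one_mem : 1 ∈ pbwFiltration Φ 0 :=
  h.mem_pbwFiltration_zero_iff.mpr ⟨1, _root_.map_one _⟩

lemma up_mem : u ∈ pbwFiltration Φ 1 := by simpa using h.up_mul_mem h.one_mem

lemma down_mem : d ∈ pbwFiltration Φ 1 := by simpa using h.down_mul_mem h.one_mem

lemma exists_sub_up_mul_add_down_mul_mem (hk : 1 ≤ k) (hx : x ∈ pbwFiltration Φ k) :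
    ∃ y ∈ pbwFiltration Φ (k - 1), ∃ z ∈ pbwFiltration Φ (k - 1),
      x - (u * y + d * z) ∈ pbwFiltration Φ (k - 1) := by
  choose p hp q hq hpq using fun n ↦
    exists_sub_upCoeff_mul_add_downCoeff_mul_mem a b g hk (hx n)
  obtain ⟨y, hy, hyp⟩ := exists_mem_pbwFiltration_apply_eq (Φ := Φ) (Equiv.subRight 1) hp
  obtain ⟨z, hz, hzq⟩ := exists_mem_pbwFiltration_apply_eq (Φ := Φ) (Equiv.addRight 1) hq
  refine ⟨y, hy, z, hz, fun n ↦ ?_⟩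
  rw [map_sub, map_add, h.map_up_mul, h.map_down_mul, Finsupp.sub_apply, Finsupp.add_apply,
    upOp_apply, downOp_apply]
  exact hyp n ▸ hzq n ▸ hpq n

lemma mul_mem {i j : ℤ} {x y : S} (hx : x ∈ pbwFiltration Φ i) (hy : y ∈ pbwFiltration Φ j) :
    x * y ∈ pbwFiltration Φ (i + j) := by
  rcases lt_or_ge i 0 with hi | hi
  · rw [pbwFiltration_eq_bot_of_neg hi, Submodule.mem_bot] at hx
    simp [hx]
  lift i to ℕ using hi
  induction i generalizing x with
  | zero =>
    obtain ⟨c, rfl⟩ := h.mem_pbwFiltration_zero_iff.mp hx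
    rw [← Algebra.smul_def, Nat.cast_zero, zero_add]
    exact Submodule.smul_mem _ c hy
  | succ i ih =>
    obtain ⟨p, hp, q, hq, hr⟩ := h.exists_sub_up_mul_add_down_mul_mem (by omega) hx
    rw [Nat.cast_succ, add_sub_cancel_right] at hp hq hr
    have := add_mem (pbwFiltration_mono (by omega) (ih hr))
      (add_mem (h.up_mul_mem (ih hp)) (h.down_mul_mem (ih hq)))
    rwa [← mul_assoc, ← mul_assoc, ← add_mul, ← add_mul, sub_add_cancel,
      show (i : ℤ) + j + 1 = (i + 1 : ℕ) + j by push_cast; ring] at this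

lemma isPositiveFiltration :
    IsPositiveFiltration fun k ↦ (pbwFiltration Φ k).toAddSubgroup where
  one_mem := h.one_mem
  mul_mem _ _ _ _ := h.mul_mem
  mono := pbwFiltration_mono
  eq_bot_of_neg k hk := by simp [pbwFiltration_eq_bot_of_neg hk]
  exists_mem := exists_mem_pbwFiltration Φ

end IsPBWCoordinates

end PBWFiltration

section PBWKoszul

open MvPolynomial

variable {R S : Type*} [CommRing R] [Ring S] [Algebra R S] {a : R} {b : Rˣ} {g : R} {u d : S}
  {Φ : S ≃ₗ[R] (ℤ →₀ MvPolynomial (Fin 2) R)} (h : IsPBWCoordinates a b g u d Φ)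

namespace IsPBWCoordinates

section WeightComponents

include h

lemma apply_smulVec_koszulMatrix₁ (x : Fin 2 → S) (n : ℤ) :
    Φ (smulVec (koszulMatrix₁ u d) x 0) n =
      upCoeff a b g (n - 1) * Φ (x 0) (n - 1) + downCoeff a b g (n + 1) * Φ (x 1) (n + 1) := by
  simp [smulVec_apply, koszulMatrix₁, h.map_up_mul, h.map_down_mul, upOp_apply, downOp_apply]

lemma apply_smulVec_koszulMatrix₂_zero (x : Fin 2 → S) (n : ℤ) :
    Φ (smulVec (koszulMatrix₂ a (b : R) g u d) x 0) (n - 1) =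
      -(weightOrbit a b g (n + 1) * Φ (x 0) (n - 1) +
        b • (downCoeff a b g n * downCoeff a b g (n + 1) * Φ (x 1) (n + 1))) := by
  have hrec := weightOrbit_add_two a b g (n - 1)
  rw [show n - 1 + 2 = n + 1 by ring, sub_add_cancel] at hrec
  have hsmul : smulVec (koszulMatrix₂ a (b : R) g u d) x 0 =
      -(a • (d * (u * x 0)) + (b : R) • (u * (d * x 0)) + g • x 0 +
        (b : R) • (d * (d * x 1))) := by
    simp [smulVec_apply, koszulMatrix₂, add_mul, mul_assoc]
    abel
  simp only [hsmul, map_neg, map_add, map_smul, h.map_up_mul, h.map_down_mul, Finsupp.neg_apply,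
    Finsupp.add_apply, Finsupp.smul_apply, downOp_upOp_apply, upOp_downOp_apply]
  rw [downOp_apply, downOp_apply, sub_add_cancel, hrec, Units.smul_def]
  simp only [smul_eq_C_mul]
  ring

lemma apply_smulVec_koszulMatrix₂_one (x : Fin 2 → S) (n : ℤ) :
    Φ (smulVec (koszulMatrix₂ a (b : R) g u d) x 1) (n + 1) =
      upCoeff a b g n * upCoeff a b g (n - 1) * Φ (x 0) (n - 1) +
        b • (weightOrbit a b g n * Φ (x 1) (n + 1)) := by
  have hsmul : smulVec (koszulMatrix₂ a (b : R) g u d) x 1 =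
      u * (u * x 0) + (d * (u * x 1) - a • (u * (d * x 1)) - g • x 1) := by
    simp [smulVec_apply, koszulMatrix₂, sub_mul, mul_assoc]
  simp only [hsmul, map_add, map_sub, map_smul, h.map_up_mul, h.map_down_mul, Finsupp.add_apply,
    Finsupp.sub_apply, Finsupp.smul_apply, downOp_upOp_apply, upOp_downOp_apply]
  rw [upOp_apply, upOp_apply, add_sub_cancel_right, show n + 1 + 1 = n + 2 by ring,
    weightOrbit_add_two, Units.smul_def]
  simp only [smul_eq_C_mul]
  ring

lemma apply_smulVec_koszulMatrix₃_zero (x : Fin 1 → S) (n : ℤ) :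
    Φ (smulVec (koszulMatrix₃ (b : R) u d) x 0) (n - 1) =
      -(b • (downCoeff a b g n * Φ (x 0) n)) := by
  simp [smulVec_apply, koszulMatrix₃, h.map_down_mul, downOp_apply, Units.smul_def]

lemma apply_smulVec_koszulMatrix₃_one (x : Fin 1 → S) (n : ℤ) :
    Φ (smulVec (koszulMatrix₃ (b : R) u d) x 1) (n + 1) = upCoeff a b g n * Φ (x 0) n := by
  simp [smulVec_apply, koszulMatrix₃, h.map_up_mul, upOp_apply]

end WeightComponents

section Exactness

include h

lemma isGradedExact_koszulMatrix₁ :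
    IsGradedExact (fun k ↦ (pbwFiltration Φ k).toAddSubgroup) (koszulMatrix₁ u d) 1
      (koszulMatrix₂ a (b : R) g u d) 2 := by
  intro k x hx hx₁
  choose c hc e he hce₀ hce₁ using fun n ↦ exists_weightSyzygy₁ a b g (hx 0 (n - 1)) (hx 1 (n + 1))
    (by simpa [h.apply_smulVec_koszulMatrix₁] using hx₁ 0 n)
  obtain ⟨y₀, hy₀, hy₀c⟩ := exists_mem_pbwFiltration_apply_eq (Φ := Φ) (Equiv.subRight 1) hc
  obtain ⟨y₁, hy₁, hy₁e⟩ := exists_mem_pbwFiltration_apply_eq (Φ := Φ) (Equiv.addRight 1) he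
  refine ⟨![y₀, y₁], Fin.forall_fin_two.mpr ⟨hy₀, hy₁⟩, Fin.forall_fin_two.mpr ⟨?_, ?_⟩⟩
  · refine (mem_pbwFiltration (Equiv.subRight 1)).mpr fun n ↦ ?_
    have := hce₀ n
    rw [← hy₀c, ← hy₁e] at this
    simpa [h.apply_smulVec_koszulMatrix₂_zero, -neg_add_rev] using this
  · refine (mem_pbwFiltration (Equiv.addRight 1)).mpr fun n ↦ ?_
    have := hce₁ n
    rw [← hy₀c, ← hy₁e] at this
    simpa [h.apply_smulVec_koszulMatrix₂_one] using this

lemma isGradedExact_koszulMatrix₂ :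
    IsGradedExact (fun k ↦ (pbwFiltration Φ k).toAddSubgroup) (koszulMatrix₂ a (b : R) g u d) 2
      (koszulMatrix₃ (b : R) u d) 1 := by
  intro k x hx hx₂
  rw [show 2 + k - 1 = k + 1 by ring] at hx₂
  choose f hf hf₀ hf₁ using fun n ↦ exists_weightSyzygy₂ a b g (hx 0 (n - 1)) (hx 1 (n + 1))
    (by rw [← neg_mem_iff, ← h.apply_smulVec_koszulMatrix₂_zero]; exact hx₂ 0 (n - 1))
    (by rw [← h.apply_smulVec_koszulMatrix₂_one]; exact hx₂ 1 (n + 1))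
  obtain ⟨y, hy, hyf⟩ := exists_mem_pbwFiltration_apply_eq (Φ := Φ) (Equiv.refl ℤ) hf
  refine ⟨![y], fun _ ↦ by simpa using hy, Fin.forall_fin_two.mpr ⟨?_, ?_⟩⟩
  · refine (mem_pbwFiltration (Equiv.subRight 1)).mpr fun n ↦ ?_
    have := hf₀ n
    rw [← hyf] at this
    simpa [h.apply_smulVec_koszulMatrix₃_zero] using this
  · refine (mem_pbwFiltration (Equiv.addRight 1)).mpr fun n ↦ ?_
    have := hf₁ n
    rw [← hyf] at this
    simpa [h.apply_smulVec_koszulMatrix₃_one] using this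

lemma isGradedExact_koszulMatrix₃ :
    IsGradedExact (fun k ↦ (pbwFiltration Φ k).toAddSubgroup) (koszulMatrix₃ (b : R) u d) 1
      (0 : Matrix (Fin 1) (Fin 0) S) 0 := by
  intro k x _ hx₃
  rw [add_sub_cancel_left] at hx₃
  refine ⟨0, fun _ ↦ zero_mem _, Fin.forall_fin_one.mpr ?_⟩
  have hx₀ : x 0 ∈ pbwFiltration Φ (k - 1) := fun n ↦ by
    refine mem_weightDegreeLE_of_smul_downCoeff_mul_mem a b g ?_ ?_
    · rw [← neg_mem_iff, ← h.apply_smulVec_koszulMatrix₃_zero]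
      exact hx₃ 0 (n - 1)
    · rw [← h.apply_smulVec_koszulMatrix₃_one]
      exact hx₃ 1 (n + 1)
  simpa [smulVec_apply] using hx₀

end Exactness

section KoszulMatrices

include h

lemma koszulMatrix₁_mem (i : Fin 1) (j : Fin 2) : koszulMatrix₁ u d i j ∈ pbwFiltration Φ 1 := by
  fin_cases i; fin_cases j
  exacts [h.up_mem, h.down_mem]

lemma koszulMatrix₂_mem (i j : Fin 2) :
    koszulMatrix₂ a (b : R) g u d i j ∈ pbwFiltration Φ 2 := by
  have hmul {x y : S} (hx : x ∈ pbwFiltration Φ 1) (hy : y ∈ pbwFiltration Φ 1) :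
      x * y ∈ pbwFiltration Φ 2 := h.mul_mem (i := 1) (j := 1) hx hy
  have h₁ : (1 : S) ∈ pbwFiltration Φ 2 := pbwFiltration_mono zero_le_two h.one_mem
  fin_cases i <;> fin_cases j
  · exact neg_mem (add_mem (add_mem (Submodule.smul_mem _ _ (hmul h.down_mem h.up_mem))
      (Submodule.smul_mem _ _ (hmul h.up_mem h.down_mem))) (Submodule.smul_mem _ _ h₁))
  · exact neg_mem (Submodule.smul_mem _ _ (hmul h.down_mem h.down_mem))
  · exact hmul h.up_mem h.up_mem
  · exact sub_mem (sub_mem (hmul h.down_mem h.up_mem)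
      (Submodule.smul_mem _ _ (hmul h.up_mem h.down_mem))) (Submodule.smul_mem _ _ h₁)

lemma koszulMatrix₃_mem (i : Fin 2) (j : Fin 1) :
    koszulMatrix₃ (b : R) u d i j ∈ pbwFiltration Φ 1 := by
  fin_cases j; fin_cases i
  exacts [neg_mem (Submodule.smul_mem _ _ h.down_mem), h.up_mem]

end KoszulMatrices

lemma isKoszulFiltration {K : Type*} [Field K] [Algebra K S] {a : K} {b : Kˣ} {g : K}
    {Φ : S ≃ₗ[K] (ℤ →₀ MvPolynomial (Fin 2) K)} (h : IsPBWCoordinates a b g u d Φ)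
    (hud : IsDownUpPair a (b : K) g u d) :
    IsKoszulFiltration (fun k ↦ (pbwFiltration Φ k).toAddSubgroup) (koszulMatrix₁ u d)
      (koszulMatrix₂ a (b : K) g u d) (koszulMatrix₃ (b : K) u d) where
  toIsPositiveFiltration := h.isPositiveFiltration
  exists_mul_eq_one x hx hx₀ := by
    obtain ⟨c, rfl⟩ := h.mem_pbwFiltration_zero_iff.mp hx
    have hc : c ≠ 0 := by rintro rfl; exact hx₀ (map_zero _)
    exact ⟨algebraMap K S c⁻¹, h.mem_pbwFiltration_zero_iff.mpr ⟨_, rfl⟩,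
      by rw [← map_mul, inv_mul_cancel₀ hc, _root_.map_one]⟩
  mem₁ := h.koszulMatrix₁_mem
  mem₂ := h.koszulMatrix₂_mem
  mem₃ := h.koszulMatrix₃_mem
  mul₁₂ := hud.koszulMatrix₁_mul_koszulMatrix₂
  mul₂₃ := hud.koszulMatrix₂_mul_koszulMatrix₃
  exists_sub_mem k hk x hx := by
    obtain ⟨y, hy, z, hz, hyz⟩ := h.exists_sub_up_mul_add_down_mul_mem hk hx
    exact ⟨![y, z], Fin.forall_fin_two.mpr ⟨hy, hz⟩,
      by simpa [smulVec_apply, koszulMatrix₁] using hyz⟩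
  exact₁ := h.isGradedExact_koszulMatrix₁
  exact₂ := h.isGradedExact_koszulMatrix₂
  exact₃ := h.isGradedExact_koszulMatrix₃

theorem isStablyFree {K : Type*} [Field K] [Algebra K S] {a : K} {b : Kˣ} {g : K}
    {Φ : S ≃ₗ[K] (ℤ →₀ MvPolynomial (Fin 2) K)} (h : IsPBWCoordinates a b g u d Φ)
    (hud : IsDownUpPair a (b : K) g u d) (P : Type*) [AddCommGroup P] [Module S P]
    [Module.Finite S P] [Module.Projective S P] : Module.IsStablyFree S P :=
  (h.isKoszulFiltration hud).isStablyFree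
    (hud.isStrictlyNoetherian h.isPositiveFiltration h.up_mem h.down_mem
      (fun _ ↦ h.mem_pbwFiltration_zero_iff)
      fun _ hk _ hx ↦ h.exists_sub_up_mul_add_down_mul_mem hk hx) P

end IsPBWCoordinates

end PBWKoszul

namespace DownUp

open MulOpposite

variable (K : Type) [Field K] (a b g : K)

/-- The generator `D` of the down-up algebra. -/
def down : DownUp K a b g := RingQuot.mkAlgHom K (DownUpRel K a b g) (FreeAlgebra.ι K 0)

/-- The generator `U` of the down-up algebra. -/
def up : DownUp K a b g := RingQuot.mkAlgHom K (DownUpRel K a b g) (FreeAlgebra.ι K 1)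

lemma isDownUpPair : IsDownUpPair a b g (up K a b g) (down K a b g) where
  mul_up_up := by
    simpa using! RingQuot.mkAlgHom_rel K (DownUpRel.rel1 (K := K) (a := a) (b := b) (g := g))
  down_down_mul := by
    simpa using! RingQuot.mkAlgHom_rel K (DownUpRel.rel2 (K := K) (a := a) (b := b) (g := g))

lemma adjoin_up_down : Algebra.adjoin K {up K a b g, down K a b g} = ⊤ := by
  have hrange : Set.range (FreeAlgebra.ι K : Fin 2 → FreeAlgebra K (Fin 2)) =
      {FreeAlgebra.ι K 0, FreeAlgebra.ι K 1} := by
    ext x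
    simp [Fin.exists_fin_two, eq_comm]
  have := congrArg (Subalgebra.map (RingQuot.mkAlgHom K (DownUpRel K a b g)))
    (FreeAlgebra.adjoin_range_ι K (Fin 2))
  rw [hrange, AlgHom.map_adjoin, Set.image_pair, Algebra.map_top,
    (AlgHom.range_eq_top _).mpr (RingQuot.mkAlgHom_surjective K _), Set.pair_comm] at this
  exact this

lemma adjoin_op_down_op_up : Algebra.adjoin K {op (down K a b g), op (up K a b g)} = ⊤ := by
  rw [← Subalgebra.op_top, ← adjoin_up_down, Subalgebra.op_adjoin, Set.pair_comm]
  congr 1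
  ext x
  simp [← unop_injective.eq_iff]

variable {K a b g} {S : Type*} [Ring S] [Algebra K S] {u d : S}

lemma exists_algHom (h : IsDownUpPair a b g u d) :
    ∃ f : DownUp K a b g →ₐ[K] S, f (up K a b g) = u ∧ f (down K a b g) = d := by
  let f : FreeAlgebra K (Fin 2) →ₐ[K] S := FreeAlgebra.lift K ![d, u]
  have hf ⦃x y : FreeAlgebra K (Fin 2)⦄ (hxy : DownUpRel K a b g x y) : f x = f y := by
    cases hxy
    · simpa [f] using h.mul_up_up
    · simpa [f] using h.down_down_mul
  refine ⟨RingQuot.liftAlgHom K ⟨f, hf⟩, ?_, ?_⟩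
  · simp [up, f]
  · simp [down, f]

variable (K) in
lemma exists_isPBWCoordinates_op (a : K) (b : Kˣ) (g : K) :
    ∃ Φ, IsPBWCoordinates a b g (op (down K a b g)) (op (up K a b g)) Φ := by
  obtain ⟨f, hf_up, hf_down⟩ := exists_algHom (isDownUpPair_upOp_downOp a b g).op
  refine (isDownUpPair K a b g).op.exists_isPBWCoordinates (adjoin_op_down_op_up K a b g)
    (T := AlgHom.opComm f) ?_ ?_
  · simp [hf_down]
  · simp [hf_up]

theorem isStablyFree_op (a : K) (b : Kˣ) (g : K) (P : Type*) [AddCommGroup P]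
    [Module (DownUp K a b g)ᵐᵒᵖ P] [Module.Finite (DownUp K a b g)ᵐᵒᵖ P]
    [Module.Projective (DownUp K a b g)ᵐᵒᵖ P] : Module.IsStablyFree (DownUp K a b g)ᵐᵒᵖ P :=
  let ⟨_, h⟩ := exists_isPBWCoordinates_op K a b g
  h.isStablyFree (isDownUpPair K a b g).op P

end DownUp

/-- If `β ≠ 0`, the down-up algebra `A = A(α,β,γ)` is a PSF ring:
every finitely generated projective right `A`-module is stably free. -/
theorem downUp_is_PSF (K : Type) [Field K] (α β γ : K) (hβ : β ≠ 0)
    (P : Type) [AddCommGroup P] [Module (DownUp K α β γ)ᵐᵒᵖ P]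
    (hfg : Module.Finite (DownUp K α β γ)ᵐᵒᵖ P)
    (hproj : Module.Projective (DownUp K α β γ)ᵐᵒᵖ P) :
    IsStablyFreeRight (DownUp K α β γ) P := by
  lift β to Kˣ using hβ.isUnit
  have : Module.IsStablyFree (DownUp K α β γ)ᵐᵒᵖ P := DownUp.isStablyFree_op α β γ P
  obtain ⟨n, m, ⟨e⟩⟩ := exists_prod_fin_fun_linearEquiv (DownUp K α β γ)ᵐᵒᵖ P
  have op (k : ℕ) :
      (Fin k → DownUp K α β γ) ≃ₗ[(DownUp K α β γ)ᵐᵒᵖ] (Fin k → (DownUp K α β γ)ᵐᵒᵖ) :=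
    LinearEquiv.piCongrRight fun _ ↦ MulOpposite.opLinearEquiv _
  exact ⟨n, m, ⟨(LinearEquiv.refl _ P).prodCongr (op n) ≪≫ₗ e ≪≫ₗ (op m).symm⟩⟩
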